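/- A Young tower consists of the following data. $(\Delta_0,m_0)$ is a finite measure space; $\{\Lambda_i\}_{i\in I}$ ($I\subseteq\mathbb N$) are pairwise disjoint measurable subsets of $\Delta_0$ with $m_0(\Lambda_i)>0$ and $m_0(\Delta_0\setminus\bigcup_i\Lambda_i)=0$; $R_i\ge 1$ are integers with $\gcd\{R_i\}=1$, and $R:\Delta_0\to\{1,2,\dots\}$ is a measurable function with $R=R_i$ on $\Lambda_i$; $F^R:\Delta_0\to\Delta_0$ is a measurable map sending each $\Lambda_i$ bijectively onto $\Delta_0$; and the partition generates, i.e. the sets $(F^R)^{-k}(\Lambda_i)$ ($k\ge 0$, $i\in I$) generate the $\sigma$-algebra of $\Delta_0$ modulo $m_0$-null sets. The separation time $s(x,y)\in\mathbb N_0\cup\{\infty\}$ of $x,y\in\Delta_0$ is the least $n\ge 0$ such that $(F^R)^n(x)$ and $(F^R)^n(y)$ do not lie in a common $\Lambda_i$. The map $F^R$ has a measurable Jacobian $JF^R$, positive on each $\Lambda_i$, with $m_0(F^R(A))=\int_A JF^R\,dm_0$ for every measurable $A$ contained in a single $\Lambda_i$, and there are $C_F>0$ and $0<\beta<1$ with $|\log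 (JF^R(x)/JF^R(y))|\le C_F\,\beta^{s(F^R(x),F^R(y))}$ for all $x,y$ in the same $\Lambda_i$. The tower is $\Delta=\{(x,l): x\in\Delta_0,\ 0\le l<R(x)\}$, with partition elements $\Delta_{l,i}=\{(x,l)\in\Delta: x\in\Lambda_i\}$ and tower map $F(x,l)=(x,l+1)$ if $l+1<R(x)$, $F(x,l)=(F^R(x),0)$ if $l+1=R(x)$; $m$ is the measure on $\Delta$ which on the level $\{(x,l)\in\Delta\}$ is the copy of $m_0$ restricted to $\{R>l\}$. The separation time is extended to $\Delta$ by $s((x,l),(y,l'))=s(x,y)$ if the two points lie in the same $\Delta_{l,i}$, and $s=0$ otherwise. For $\theta>0$ and $D>0$ say that $\varphi:\Delta\to\mathbb R$ belongs to $\mathcal G_\theta^+$ with constant $D$ if $$|\varphi(x)-\varphi(y)|\le \frac{D}{\max\{s(x,y),1\}^\theta}\quad\text{for all }x,y\in\Delta,$$ and on each $\Delta_{l,i}$ either $\varphi\equiv 0$, or $\varphi>0$ and $\big|\frac{\varphi(x)}{\varphi(y)}-1\big|\le \frac{D}{\max\{s(x,y),1\}^\theta}$ for all $x,y\in\Delta_{l,i}$.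 (Here $\beta^\infty=0$ and $D/\infty^\theta=0$.) Let $|\cdot|$ denote the total variation norm of a signed measure. Theorem. For every Young tower there exist $\theta_0>1$ and, for each $\theta\ge\theta_0$, a constant $\zeta_0=\zeta_0(\theta)>1$ with the following property. Let $\theta\ge\theta_0$, $1<\zeta<\zeta_0$ and $C>0$, and suppose that $m_0\{R>n\}\le C n^{-\zeta}$ for all $n\ge 1$. Then there is a unique $F$-invariant probability measure $\nu$ on $\Delta$ equivalent to $m$, and for every $D>0$ there is $C'>0$ such that, for every probability measure $\lambda$ on $\Delta$ whose density $\varphi=d\lambda/dm$ belongs to $\mathcal G_\theta^+$ with constant $D$, $$|F^n_*\lambda-\nu|\le \frac{C'}{n^{\zeta-1}}\qquad\text{for all } n\ge 1 .$$ Thus, for a given tower and given $\theta,\zeta,C$, the constant $C'$ depends on $\lambda$ only through $D$. -/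

import Mathlib

noncomputable section

open MeasureTheory

/-- `β ^ s` for an extended natural number `s`, with `β ^ ∞ = 0`. -/
def epow (β : ℝ) (s : ℕ∞) : ℝ := if s = ⊤ then 0 else β ^ s.toNat

/-- `1 / max {s, 1} ^ θ` for an extended natural number `s`, with value `0` for `s = ∞`. -/
def gpow (θ : ℝ) (s : ℕ∞) : ℝ := if s = ⊤ then 0 else 1 / (max (s.toNat : ℝ) 1) ^ θ

/-- The separation time of `x` and `y`: the least `n` for which the `n`-th iterates of the return
map do not lie in a common partition element (`∞` if there is no such `n`). -/
def sepTime {Δ₀ : Type*} (I : Set ℕ) (Λ : ℕ → Set Δ₀) (FR : Δ₀ → Δ₀) (x y : Δ₀) : ℕ∞ :=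
  ⨅ n ∈ {n : ℕ | ¬ ∃ i ∈ I, FR^[n] x ∈ Λ i ∧ FR^[n] y ∈ Λ i}, (n : ℕ∞)

/-- The data of a Young tower over the base `Δ₀`. -/
structure YoungTower (Δ₀ : Type*) [MeasurableSpace Δ₀] where
  /-- the reference measure on the base -/
  m₀ : Measure Δ₀
  m₀_finite : IsFiniteMeasure m₀
  /-- the index set of the partition `{Λ i}` -/
  I : Set ℕ
  Λ : ℕ → Set Δ₀
  Λ_meas : ∀ i ∈ I, MeasurableSet (Λ i)
  Λ_disj : I.PairwiseDisjoint Λ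
  Λ_pos : ∀ i ∈ I, 0 < m₀ (Λ i)
  Λ_full : m₀ (Set.univ \ ⋃ i ∈ I, Λ i) = 0
  /-- the return times `R_i` -/
  Ret : ℕ → ℕ
  Ret_pos : ∀ i ∈ I, 1 ≤ Ret i
  /-- `gcd {R_i} = 1` -/
  Ret_gcd : ∀ d : ℕ, (∀ i ∈ I, d ∣ Ret i) → d = 1
  /-- the return time function -/
  R : Δ₀ → ℕ
  R_meas : Measurable R
  R_pos : ∀ x, 0 < R x
  R_eq : ∀ i ∈ I, ∀ x ∈ Λ i, R x = Ret i
  /-- the return map `F^R` -/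
  FR : Δ₀ → Δ₀
  FR_meas : Measurable FR
  FR_bij : ∀ i ∈ I, Set.BijOn FR (Λ i) Set.univ
  /-- the partition generates: modulo `m₀`, the sets `(F^R)^{-k}(Λ i)` generate the `σ`-algebra -/
  generating : ∀ A : Set Δ₀, MeasurableSet A → ∃ B : Set Δ₀,
    MeasurableSet[MeasurableSpace.generateFrom
      {S : Set Δ₀ | ∃ k : ℕ, ∃ i ∈ I, S = FR^[k] ⁻¹' Λ i}] B ∧ A =ᵐ[m₀] B
  /-- the Jacobian of `F^R` -/
  JFR : Δ₀ → ℝ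
  JFR_meas : Measurable JFR
  JFR_pos : ∀ i ∈ I, ∀ x ∈ Λ i, 0 < JFR x
  JFR_jac : ∀ i ∈ I, ∀ A : Set Δ₀, A ⊆ Λ i → MeasurableSet A →
    m₀ (FR '' A) = ∫⁻ x in A, ENNReal.ofReal (JFR x) ∂m₀
  CF : ℝ
  β : ℝ
  CF_pos : 0 < CF
  β_pos : 0 < β
  β_lt_one : β < 1
  distortion : ∀ i ∈ I, ∀ x ∈ Λ i, ∀ y ∈ Λ i,
    |Real.log (JFR x / JFR y)| ≤ CF * epow β (sepTime I Λ FR (FR x) (FR y))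

namespace YoungTower

variable {Δ₀ : Type*} [MeasurableSpace Δ₀] (T : YoungTower Δ₀)

/-- The tower `Δ = {(x, l) : x ∈ Δ₀, 0 ≤ l < R x}`. -/
abbrev Tower : Type _ := {p : Δ₀ × ℕ // p.2 < T.R p.1}

/-- The tower map `F`. -/
def towerMap (p : T.Tower) : T.Tower :=
  if h : p.1.2 + 1 < T.R p.1.1 then ⟨(p.1.1, p.1.2 + 1), h⟩
  else ⟨(T.FR p.1.1, 0), T.R_pos _⟩

/-- The reference measure `m` on the tower: on the `l`-th level it is the copy of `m₀`
restricted to `{R > l}`. -/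
def towerMeasure : Measure T.Tower :=
  (Measure.sum fun l : ℕ =>
    (T.m₀.restrict {x | l < T.R x}).map fun x => (x, l)).comap Subtype.val

/-- The partition element `Δ_{l,i}` of the tower. -/
def pieceSet (l i : ℕ) : Set T.Tower := {p | p.1.2 = l ∧ p.1.1 ∈ T.Λ i}

open Classical in
/-- The separation time on the tower: that of the base points if the two points lie in the same
`Δ_{l,i}`, and `0` otherwise. -/
def sepTower (p q : T.Tower) : ℕ∞ :=
  if ∃ l : ℕ, ∃ i ∈ T.I, p ∈ T.pieceSet l i ∧ q ∈ T.pieceSet l i then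
    sepTime T.I T.Λ T.FR p.1.1 q.1.1
  else 0

/-- `φ` belongs to `𝒢_θ` with constant `D`. -/
def MemG (θ D : ℝ) (φ : T.Tower → ℝ) : Prop :=
  ∀ p q : T.Tower, |φ p - φ q| ≤ D * gpow θ (T.sepTower p q)

/-- `φ` belongs to `𝒢_θ⁺` with constant `D`: it belongs to `𝒢_θ` with constant `D`, and on each
`Δ_{l,i}` either `φ ≡ 0`, or `φ > 0` and `|φ p / φ q - 1| ≤ D / max {s(p,q), 1} ^ θ`. -/
def MemGPlus (θ D : ℝ) (φ : T.Tower → ℝ) : Prop :=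
  T.MemG θ D φ ∧ ∀ l : ℕ, ∀ i ∈ T.I,
    (∀ p ∈ T.pieceSet l i, φ p = 0) ∨
    ((∀ p ∈ T.pieceSet l i, 0 < φ p) ∧
      ∀ p ∈ T.pieceSet l i, ∀ q ∈ T.pieceSet l i,
        |φ p / φ q - 1| ≤ D * gpow θ (T.sepTower p q))

/-- `ν` is `F`-invariant and equivalent to `m`. -/
def IsInvariantEquiv (ν : Measure T.Tower) : Prop :=
  MeasurePreserving T.towerMap ν ν ∧ ν ≪ T.towerMeasure ∧ T.towerMeasure ≪ ν

end YoungTower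

/-- The total variation norm `|μ - ν|` of the difference of two finite measures. -/
def tvDist {X : Type*} [MeasurableSpace X] (μ ν : Measure X)
    [IsFiniteMeasure μ] [IsFiniteMeasure ν] : ℝ :=
  ((μ.toSignedMeasure - ν.toSignedMeasure).totalVariation Set.univ).toReal

end

open MeasureTheory

/-!
Call a measure on the tower tame if it has bounded distortion on cylinders and a density bounded by
a multiple of its mass. A return to the ground level turns a distortion constant `K` into
`K β + C_F`, so tame measures stay tame. Since the return times have no common divisor, at a common
time all tame measures of unit mass contain a definite multiple of the reference measure of the
ground level; after subtracting a smaller multiple, convexity of `exp` shows that the remainder is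
still tame, up to the mass which has not returned yet. Repeating this with waiting times
proportional to the elapsed time brings two tame measures of equal mass together at the rate
`n ^ (-γ)`, `γ = ζ - 1`, of the tail of the return time on the tower, so the images of all tame
probability measures have a common setwise limit `ν`. An invariant set is approximated by unions of
cylinders, which equidistribute, so `ν` is ergodic; hence it is the only invariant probability
measure equivalent to `m`.

A density in `𝒢_θ⁺` is the sum of the increments of its infima over cylinders of length `k`. The
`k`-th increment has size of order `k ^ (-θ)` and is constant on cylinders of length `k + 1`, so it
becomes tame once its points have returned `k + 1` times; waiting a time `n / (k + 1)` for each
return, the part which fails to do so has mass of order `k ^ (1 + γ - θ) * n ^ (-γ)`, which is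
summable in `k` for `θ > γ + 2`.
-/

noncomputable section

open scoped ENNReal

/-! ### Estimates in `ℝ` and `ℝ≥0∞` -/

theorem exp_mul_le {s : ℝ} (hs : 0 ≤ s) (hs' : s ≤ 1) (b : ℝ) :
    Real.exp (s * b) ≤ s * Real.exp b + (1 - s) := by
  simpa using convexOn_exp.2 (Set.mem_univ b) (Set.mem_univ 0) hs (sub_nonneg.2 hs') (by ring)

theorem add_mul_le_mul_add_mul {s t e e' a u u' y y' : ℝ≥0∞} (hst : s + t = 1) (he : 1 ≤ e)
    (he' : e' ≤ s * e + t) (hfin : t * (a * y * y') ≠ ∞)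
    (h : (u + a * y) * y' ≤ e' * ((u' + a * y') * y)) :
    (u + s * a * y) * y' ≤ e * ((u' + s * a * y') * y) := by
  have hle : s * e + t ≤ e := calc
    s * e + t ≤ s * e + t * e := by gcongr; exact le_mul_of_one_le_right zero_le he
    _ = e := by rw [← add_mul, hst, one_mul]
  refine (ENNReal.add_le_add_iff_right hfin).1 ?_
  calc (u + s * a * y) * y' + t * (a * y * y') = u * y' + (s + t) * (a * y * y') := by ring
    _ = (u + a * y) * y' := by rw [hst]; ring
    _ ≤ (s * e + t) * ((u' + a * y') * y) := h.trans (by gcongr)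
    _ = (s * e + t) * (u' * y) + s * e * (a * y * y') + t * (a * y * y') := by ring
    _ ≤ e * (u' * y) + s * e * (a * y * y') + t * (a * y * y') := by gcongr
    _ = e * ((u' + s * a * y') * y) + t * (a * y * y') := by ring

theorem exists_le_one_mul_eq {x y : ℝ≥0∞} (h : x ≤ y) (hy : y ≠ ∞) : ∃ c ≤ 1, c * y = x := by
  obtain rfl | h0 := eq_or_ne y 0
  · exact ⟨1, le_rfl, by rw [mul_zero, nonpos_iff_eq_zero.1 h]⟩
  · exact ⟨x / y, ENNReal.div_le_of_le_mul (by rwa [one_mul]), ENNReal.div_mul_cancel h0 hy⟩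

theorem rpow_neg_le_of_mul_le {x y c γ : ℝ} (hx : 0 < x) (hc : 0 < c) (h : c * x ≤ y)
    (hγ : 0 ≤ γ) : y ^ (-γ) ≤ c ^ (-γ) * x ^ (-γ) := by
  rw [← Real.mul_rpow hc.le hx.le]
  exact Real.rpow_le_rpow_of_nonpos (mul_pos hc hx) h (neg_nonpos.2 hγ)

theorem rpow_neg_le_of_le_mul {x y c γ : ℝ} (hx : 0 < x) (hc : 0 < c) (h : x ≤ c * y)
    (hγ : 0 ≤ γ) : y ^ (-γ) ≤ c ^ γ * x ^ (-γ) := by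
  have := rpow_neg_le_of_mul_le hx (inv_pos.2 hc) ((inv_mul_le_iff₀ hc).2 h) hγ
  rwa [Real.rpow_neg (inv_pos.2 hc).le, Real.inv_rpow hc.le, inv_inv] at this

theorem exists_mul_rpow_neg_le {q q' : ℝ} (h : q < q') (γ : ℝ) :
    ∃ s ∈ Set.Ioo (0 : ℝ) 1, q * s ^ (-γ) ≤ q' := by
  have hcont : ContinuousAt (fun s : ℝ => q * s ^ (-γ)) 1 :=
    continuousAt_const.mul (Real.continuousAt_rpow_const _ _ (.inl one_ne_zero))
  have hlim : Filter.Tendsto (fun s : ℝ => q * s ^ (-γ)) (nhdsWithin 1 (Set.Iio 1)) (nhds q) := by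
    have := hcont.tendsto.mono_left (nhdsWithin_le_nhds (s := Set.Iio 1))
    rwa [Real.one_rpow, mul_one] at this
  obtain ⟨s, hs, hs'⟩ := ((hlim.eventually_le_const h).and (Ioo_mem_nhdsLT one_pos)).exists
  exact ⟨s, hs', hs⟩

theorem exists_eq_add_add {s : ℝ} (hs : s ∈ Set.Ioo (0 : ℝ) 1) (N : ℕ) :
    ∃ n₀ : ℕ, ∀ n > n₀, ∃ n' h : ℕ, n = n' + (N + h) ∧ s * n ≤ n' ∧ (1 - s) / 2 * n ≤ h := by
  have hd : 0 < (1 - s) / 2 := by linarith [hs.2]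
  obtain ⟨n₀, hn₀⟩ := exists_nat_ge ((N + 1) / ((1 - s) / 2))
  refine ⟨n₀, fun n hn => ?_⟩
  have hlarge : (N : ℝ) + 1 ≤ (1 - s) / 2 * n := by
    rw [mul_comm, ← div_le_iff₀ hd]
    exact hn₀.trans (Nat.cast_le.2 hn.le)
  have hceil : (⌈s * n⌉₊ : ℝ) < s * n + 1 :=
    Nat.ceil_lt_add_one (mul_nonneg hs.1.le (Nat.cast_nonneg n))
  have hle : ⌈s * n⌉₊ + N ≤ n := by
    have : ((⌈s * n⌉₊ + N : ℕ) : ℝ) ≤ n := by push_cast; nlinarith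
    exact_mod_cast this
  refine ⟨⌈s * n⌉₊, n - (⌈s * n⌉₊ + N), by lia, Nat.le_ceil _, ?_⟩
  rw [Nat.cast_sub hle, Nat.cast_add]
  linarith

/-- If the rate can be improved from `a` to `q a + b h ^ (-γ)` in time `N + h` for every `h`, then
choosing `h` proportional to the elapsed time gives a polynomial rate. -/
theorem exists_polynomial_rate {P : ℕ → ℝ → Prop} {q b γ : ℝ} {N : ℕ} (hq : 0 ≤ q) (hq' : q < 1)
    (hb : 0 ≤ b) (hγ : 0 ≤ γ) (mono : ∀ n a a', a ≤ a' → P n a → P n a') (start : ∀ n, P n 1)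
    (step : ∀ n h a, 1 ≤ h → 0 ≤ a → P n a → P (n + (N + h)) (q * a + b * (h : ℝ) ^ (-γ))) :
    ∃ A : ℝ, 0 ≤ A ∧ ∀ n, 1 ≤ n → P n (A * (n : ℝ) ^ (-γ)) := by
  obtain ⟨s, hs, hqs⟩ := exists_mul_rpow_neg_le (show q < (1 + q) / 2 by linarith) γ
  obtain ⟨n₀, hsplit⟩ := exists_eq_add_add hs N
  have hd : 0 < (1 - s) / 2 := by linarith [hs.2]
  set d := (1 - s) / 2
  set A : ℝ := max ((n₀ : ℝ) ^ γ) (b * d ^ (-γ) / ((1 - q) / 2))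
  have hA : 0 ≤ A := le_max_of_le_left (by positivity)
  have hbA : b * d ^ (-γ) ≤ A * ((1 - q) / 2) := (div_le_iff₀ (by linarith)).1 (le_max_right _ _)
  refine ⟨A, hA, fun n => ?_⟩
  induction n using Nat.strong_induction_on with
  | _ n ih =>
    intro hn
    have hn0 : (0 : ℝ) < n := Nat.cast_pos.2 hn
    rcases le_or_gt n n₀ with hle | hlt
    · refine mono n 1 _ ?_ (start n)
      calc 1 = (n : ℝ) ^ γ * (n : ℝ) ^ (-γ) := by
            rw [← Real.rpow_add hn0, add_neg_cancel, Real.rpow_zero]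
        _ ≤ A * (n : ℝ) ^ (-γ) := by
            gcongr
            exact le_max_of_le_left (by gcongr)
    · obtain ⟨n', h, hn_eq, hn', hh⟩ := hsplit n hlt
      have hn'_pos : 0 < n' := Nat.cast_pos.1 ((mul_pos hs.1 hn0).trans_le hn')
      have hh_pos : 0 < h := Nat.cast_pos.1 ((mul_pos hd hn0).trans_le hh)
      have hrec := step n' h _ hh_pos (by positivity) (ih n' (by lia) hn'_pos)
      rw [← hn_eq] at hrec
      refine mono n _ _ ?_ hrec
      calc q * (A * (n' : ℝ) ^ (-γ)) + b * (h : ℝ) ^ (-γ)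
          ≤ q * (A * (s ^ (-γ) * (n : ℝ) ^ (-γ))) + b * (d ^ (-γ) * (n : ℝ) ^ (-γ)) := by
            gcongr
            · exact rpow_neg_le_of_mul_le hn0 hs.1 hn' hγ
            · exact rpow_neg_le_of_mul_le hn0 hd hh hγ
        _ = (q * s ^ (-γ) * A + b * d ^ (-γ)) * (n : ℝ) ^ (-γ) := by ring
        _ ≤ ((1 + q) / 2 * A + A * ((1 - q) / 2)) * (n : ℝ) ^ (-γ) := by gcongr
        _ = A * (n : ℝ) ^ (-γ) := by ring

theorem tendsto_const_mul_natCast_rpow_neg (K : ℝ) {γ : ℝ} (hγ : 0 < γ) :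
    Filter.Tendsto (fun n : ℕ => K * (n : ℝ) ^ (-γ)) Filter.atTop (nhds 0) := by
  simpa using ((tendsto_rpow_neg_atTop hγ).comp tendsto_natCast_atTop_atTop).const_mul K

theorem one_add_mul_one_sub_le_rpow_neg {y γ : ℝ} (hy : 0 < y) (hγ : 0 ≤ γ) :
    1 + γ * (1 - y) ≤ y ^ (-γ) := by
  rw [Real.rpow_def_of_pos hy]
  have hlog := Real.log_le_sub_one_of_pos hy
  have hexp := Real.add_one_le_exp (Real.log y * -γ)
  nlinarith

theorem mul_rpow_neg_succ_le_sub {x γ : ℝ} (hx : 0 < x) (hγ : 0 ≤ γ) :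
    γ * (x + 1) ^ (-(γ + 1)) ≤ x ^ (-γ) - (x + 1) ^ (-γ) := by
  have hx1 : 0 < x + 1 := by linarith
  have hratio : 1 - x / (x + 1) = (x + 1)⁻¹ := by field_simp; ring
  calc γ * (x + 1) ^ (-(γ + 1)) = γ * (1 - x / (x + 1)) * (x + 1) ^ (-γ) := by
        rw [hratio, neg_add, Real.rpow_add hx1, Real.rpow_neg_one]
        ring
    _ ≤ ((x / (x + 1)) ^ (-γ) - 1) * (x + 1) ^ (-γ) := by
        gcongr
        linarith [one_add_mul_one_sub_le_rpow_neg (div_pos hx hx1) hγ]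
    _ = x ^ (-γ) - (x + 1) ^ (-γ) := by
        rw [sub_mul, one_mul, ← Real.mul_rpow (div_pos hx hx1).le hx1.le,
          div_mul_cancel₀ x hx1.ne']

theorem rpow_neg_succ_le_mul_sub {x γ : ℝ} (hx : 1 ≤ x) (hγ : 0 < γ) :
    x ^ (-(γ + 1)) ≤ 2 ^ (γ + 1) / γ * (x ^ (-γ) - (x + 1) ^ (-γ)) := by
  calc x ^ (-(γ + 1)) ≤ 2 ^ (γ + 1) * (x + 1) ^ (-(γ + 1)) :=
        rpow_neg_le_of_le_mul (by linarith) two_pos (by linarith) (by linarith)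
    _ = 2 ^ (γ + 1) / γ * (γ * (x + 1) ^ (-(γ + 1))) := by field_simp
    _ ≤ 2 ^ (γ + 1) / γ * (x ^ (-γ) - (x + 1) ^ (-γ)) := by
        gcongr
        exact mul_rpow_neg_succ_le_sub (by linarith) hγ.le

theorem sum_rpow_neg_succ_le {γ : ℝ} (hγ : 0 < γ) {h : ℕ} (hh : 1 ≤ h) (L : ℕ) :
    ∑ l ∈ Finset.range L, ((l + h : ℕ) : ℝ) ^ (-(γ + 1)) ≤ 2 ^ (γ + 1) / γ * (h : ℝ) ^ (-γ) := by
  calc ∑ l ∈ Finset.range L, ((l + h : ℕ) : ℝ) ^ (-(γ + 1))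
      ≤ ∑ l ∈ Finset.range L,
          2 ^ (γ + 1) / γ * (((l + h : ℕ) : ℝ) ^ (-γ) - ((l + 1 + h : ℕ) : ℝ) ^ (-γ)) := by
        refine Finset.sum_le_sum fun l _ => ?_
        have := rpow_neg_succ_le_mul_sub (x := (l + h : ℕ)) (by exact_mod_cast (by lia)) hγ
        rwa [← Nat.cast_add_one, show l + h + 1 = l + 1 + h by lia] at this
    _ = 2 ^ (γ + 1) / γ * ((h : ℝ) ^ (-γ) - ((L + h : ℕ) : ℝ) ^ (-γ)) := by
        rw [← Finset.mul_sum, Finset.sum_range_sub' fun l => ((l + h : ℕ) : ℝ) ^ (-γ), zero_add]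
    _ ≤ 2 ^ (γ + 1) / γ * (h : ℝ) ^ (-γ) := by
        gcongr
        exact sub_le_self _ (by positivity)

theorem natCast_rpow_neg_le_mul_succ {k : ℕ} (hk : 1 ≤ k) {θ : ℝ} (hθ : 0 ≤ θ) :
    (k : ℝ) ^ (-θ) ≤ 2 ^ θ * ((k + 1 : ℕ) : ℝ) ^ (-θ) := by
  refine rpow_neg_le_of_le_mul (by positivity) two_pos ?_ hθ
  exact_mod_cast (by lia : k + 1 ≤ 2 * k)

theorem natCast_div_rpow_neg_le {n k : ℕ} (hk : 0 < k) (hkn : k ≤ n) {γ : ℝ} (hγ : 0 ≤ γ) :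
    ((n / k : ℕ) : ℝ) ^ (-γ) ≤ 2 ^ γ * (k : ℝ) ^ γ * (n : ℝ) ^ (-γ) := by
  have hdiv : 1 ≤ n / k := (Nat.one_le_div_iff hk).2 hkn
  have hlt : n < k * (n / k + 1) := Nat.lt_mul_div_succ n hk
  rw [← Real.mul_rpow two_pos.le (Nat.cast_nonneg k)]
  refine rpow_neg_le_of_le_mul (by exact_mod_cast hk.trans_le hkn) (by positivity) ?_ hγ
  exact_mod_cast (by nlinarith : n ≤ 2 * k * (n / k))

/-! ### Measures -/

/-- Regularity of `μ` relative to the reference measure `m`, where `r k` is the relation of lying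
in a common cylinder of length `k`: for `k ≥ j`, the densities of two subsets of such a cylinder
differ by a factor of at most `δ k`. Comparing sets instead of density functions avoids any choice
of a version of the density. -/
def HasDistortion {X : Type*} [MeasurableSpace X] (r : ℕ → X → X → Prop) (δ : ℕ → ℝ≥0∞)
    (m : Measure X) (j : ℕ) (μ : Measure X) : Prop :=
  ∀ k, j ≤ k → ∀ A A', MeasurableSet A → MeasurableSet A' → (∀ x ∈ A, ∀ y ∈ A', r k x y) →
    μ A * m A' ≤ δ k * (μ A' * m A)

namespace HasDistortion

variable {X : Type*} [MeasurableSpace X] {r : ℕ → X → X → Prop} {δ : ℕ → ℝ≥0∞} {m : Measure X}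
  {j : ℕ}

theorem sum {ι : Type*} {μ : ι → Measure X} (h : ∀ i, HasDistortion r δ m j (μ i)) :
    HasDistortion r δ m j (Measure.sum μ) := by
  intro k hj A A' hA hA' hr
  rw [Measure.sum_apply _ hA, Measure.sum_apply _ hA', ← ENNReal.tsum_mul_right,
    ← ENNReal.tsum_mul_right, ← ENNReal.tsum_mul_left]
  exact ENNReal.tsum_le_tsum fun i => h i k hj A A' hA hA' hr

theorem add {μ ν : Measure X} (hμ : HasDistortion r δ m j μ) (hν : HasDistortion r δ m j ν) :
    HasDistortion r δ m j (μ + ν) := by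
  intro k hj A A' hA hA' hr
  rw [Measure.add_apply, Measure.add_apply, add_mul, add_mul, mul_add]
  exact add_le_add (hμ k hj A A' hA hA' hr) (hν k hj A A' hA hA' hr)

theorem smul {μ : Measure X} (h : HasDistortion r δ m j μ) (c : ℝ≥0∞) :
    HasDistortion r δ m j (c • μ) := by
  intro k hj A A' hA hA' hr
  rw [Measure.smul_apply, Measure.smul_apply, smul_eq_mul, smul_eq_mul, mul_assoc, mul_assoc,
    mul_left_comm _ c]
  exact mul_le_mul_right (h k hj A A' hA hA' hr) c

theorem mono {δ' : ℕ → ℝ≥0∞} {j' : ℕ} {μ : Measure X} (h : HasDistortion r δ m j μ)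
    (hδ : δ ≤ δ') (hj : j ≤ j') : HasDistortion r δ' m j' μ := fun k hk A A' hA hA' hr =>
  (h k (hj.trans hk) A A' hA hA' hr).trans (mul_le_mul_left (hδ k) _)

theorem self (hδ : ∀ k, 1 ≤ δ k) : HasDistortion r δ m j m := fun k _ A A' _ _ _ => by
  rw [mul_comm (m A)]
  exact le_mul_of_one_le_left zero_le (hδ k)

theorem withDensity {g : X → ℝ≥0∞} (hδ : ∀ k, 1 ≤ δ k)
    (hg : ∀ k, j ≤ k → ∀ x y, r k x y → g x = g y) :
    HasDistortion r δ m j (m.withDensity g) := by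
  intro k hk A A' hA hA' hr
  obtain rfl | ⟨x, hx⟩ := A.eq_empty_or_nonempty
  · simp
  obtain rfl | ⟨y, hy⟩ := A'.eq_empty_or_nonempty
  · simp
  have withDensity_eq {S : Set X} (hS : MeasurableSet S) (hconst : ∀ z ∈ S, g z = g x) :
      m.withDensity g S = g x * m S := by
    rw [withDensity_apply _ hS, setLIntegral_congr_fun hS hconst, setLIntegral_const]
  have hgA : ∀ z ∈ A, g z = g x := fun z hz =>
    (hg k hk z y (hr z hz y hy)).trans (hg k hk x y (hr x hx y hy)).symm
  have hgA' : ∀ z ∈ A', g z = g x := fun z hz => (hg k hk x z (hr x hx z hz)).symm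
  rw [withDensity_eq hA hgA, withDensity_eq hA' hgA', mul_right_comm]
  exact le_mul_of_one_le_left zero_le (hδ k)

variable {μ : Measure X} {k : ℕ}

theorem le_smul [IsFiniteMeasure m] (h : HasDistortion r δ m j μ) (hk : j ≤ k)
    (hr : ∀ x y, r k x y) (hm : m Set.univ ≠ 0) :
    μ ≤ (δ k / m Set.univ * μ Set.univ) • m := by
  refine Measure.le_iff.2 fun A hA => ?_
  have hdist := h k hk A Set.univ hA .univ fun _ _ _ _ => hr _ _
  rw [Measure.smul_apply, smul_eq_mul]
  refine ((ENNReal.le_div_iff_mul_le (.inl hm) (.inl (measure_ne_top _ _))).2 hdist).trans_eq ?_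
  simp only [div_eq_mul_inv]
  ring

theorem smul_le (h : HasDistortion r δ m j μ) (hk : j ≤ k) (hr : ∀ x y, r k x y) :
    ((δ k * m Set.univ)⁻¹ * μ Set.univ) • m ≤ μ := by
  refine Measure.le_iff.2 fun A hA => ?_
  have hdist := h k hk Set.univ A .univ hA fun _ _ _ _ => hr _ _
  rw [Measure.smul_apply, smul_eq_mul, mul_assoc, ← ENNReal.div_eq_inv_mul]
  refine ENNReal.div_le_of_le_mul' (hdist.trans_eq ?_)
  ring

end HasDistortion

theorem sum_restrict_fiber {X : Type*} [MeasurableSpace X] (μ : Measure X) {f : X → ℕ}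
    (hf : Measurable f) : (Measure.sum fun n => μ.restrict {x | f x = n}) = μ := by
  rw [← Measure.restrict_iUnion (fun _ _ hne => Set.disjoint_left.2 fun x hx hx' =>
    hne (hx.symm.trans hx')) fun n => measurableSet_eq_fun hf measurable_const]
  rw [show (⋃ n, {x | f x = n}) = Set.univ from
    Set.eq_univ_of_forall fun x => Set.mem_iUnion.2 ⟨f x, rfl⟩, Measure.restrict_univ]

theorem smul_sum_univ_le_sum {X ι : Type*} [MeasurableSpace X] {μ ν : ι → Measure X}
    {g : Measure X} {c : ℝ≥0∞} (h : ∀ i, (c * μ i Set.univ) • g ≤ ν i) :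
    (c * Measure.sum μ Set.univ) • g ≤ Measure.sum ν := by
  refine Measure.le_iff.2 fun A hA => ?_
  rw [Measure.smul_apply, smul_eq_mul, Measure.sum_apply _ .univ, Measure.sum_apply _ hA,
    ← ENNReal.tsum_mul_left, ← ENNReal.tsum_mul_right]
  exact ENNReal.tsum_le_tsum fun i => h i A

theorem smul_le_smul_measure {X : Type*} [MeasurableSpace X] {c c' : ℝ≥0∞} (hc : c ≤ c')
    (μ : Measure X) : c • μ ≤ c' • μ := Measure.le_iff.2 fun A _ => by
  rw [Measure.smul_apply, Measure.smul_apply, smul_eq_mul, smul_eq_mul]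
  gcongr

/-- Two measures are `ε`-close if they have a common part up to remainders of mass at most `ε`. -/
def Close {X : Type*} [MeasurableSpace X] (ε : ℝ≥0∞) (μ ν : Measure X) : Prop :=
  ∃ c r r', μ = c + r ∧ ν = c + r' ∧ r Set.univ ≤ ε ∧ r' Set.univ ≤ ε

namespace Close

variable {X : Type*} [MeasurableSpace X] {ε ε' : ℝ≥0∞} {μ ν : Measure X}

theorem symm (h : Close ε μ ν) : Close ε ν μ := by
  obtain ⟨c, r, r', hμ, hν, hr, hr'⟩ := h
  exact ⟨c, r', r, hν, hμ, hr', hr⟩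

theorem mono (h : Close ε μ ν) (hε : ε ≤ ε') : Close ε' μ ν := by
  obtain ⟨c, r, r', hμ, hν, hr, hr'⟩ := h
  exact ⟨c, r, r', hμ, hν, hr.trans hε, hr'.trans hε⟩

theorem of_univ_le (hμ : μ Set.univ ≤ ε) (hν : ν Set.univ ≤ ε) : Close ε μ ν :=
  ⟨0, μ, ν, (zero_add _).symm, (zero_add _).symm, hμ, hν⟩

theorem add_left (h : Close ε μ ν) (g : Measure X) : Close ε (g + μ) (g + ν) := by
  obtain ⟨c, r, r', rfl, rfl, hr, hr'⟩ := h
  exact ⟨g + c, r, r', (add_assoc _ _ _).symm, (add_assoc _ _ _).symm, hr, hr'⟩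

theorem add {μ' ν' : Measure X} (h : Close ε μ ν) (h' : Close ε' μ' ν') :
    Close (ε + ε') (μ + μ') (ν + ν') := by
  obtain ⟨c, r, r', rfl, rfl, hr, hr'⟩ := h
  obtain ⟨d, s, s', rfl, rfl, hs, hs'⟩ := h'
  exact ⟨c + d, r + s, r' + s', add_add_add_comm _ _ _ _, add_add_add_comm _ _ _ _,
    add_le_add hr hs, add_le_add hr' hs'⟩

theorem apply_le (h : Close ε μ ν) (A : Set X) : μ A ≤ ν A + ε := by
  obtain ⟨c, r, r', rfl, rfl, hr, -⟩ := h
  rw [Measure.add_apply, Measure.add_apply, add_assoc]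
  gcongr
  exact ((measure_mono (Set.subset_univ A)).trans hr).trans le_add_self

theorem abs_measureReal_sub_le {ε : ℝ} [IsFiniteMeasure μ] [IsFiniteMeasure ν]
    (h : Close (ENNReal.ofReal ε) μ ν) (hε : 0 ≤ ε) (A : Set X) :
    |μ.real A - ν.real A| ≤ ε := by
  wlog hle : ν.real A ≤ μ.real A generalizing μ ν
  · rw [abs_sub_comm]
    exact this h.symm (le_of_not_ge hle)
  have happly := ENNReal.toReal_mono (by finiteness) (h.apply_le A)
  rw [ENNReal.toReal_add (by finiteness) (by finiteness), ENNReal.toReal_ofReal hε] at happly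
  rw [abs_of_nonneg (sub_nonneg.2 hle)]
  exact sub_le_iff_le_add'.2 happly

end Close

/-- The total variation of a signed measure is attained on a Hahn decomposition. -/
theorem tvDist_le_two_mul {X : Type*} [MeasurableSpace X] {μ ν : Measure X} [IsFiniteMeasure μ]
    [IsFiniteMeasure ν] {ε : ℝ} (h : ∀ A, MeasurableSet A → |μ.real A - ν.real A| ≤ ε) :
    tvDist μ ν ≤ 2 * ε := by
  unfold tvDist SignedMeasure.totalVariation
  set s := μ.toSignedMeasure - ν.toSignedMeasure with hs
  have apply_eq : ∀ A, MeasurableSet A → s A = μ.real A - ν.real A := fun A hA => by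
    rw [hs, sub_apply, Measure.toSignedMeasure_apply_measurable hA,
      Measure.toSignedMeasure_apply_measurable hA]
  obtain ⟨P, hP, _, _, hpos, hneg⟩ := s.toJordanDecomposition_spec
  rw [hpos, hneg, Measure.add_apply, SignedMeasure.toMeasureOfZeroLE_apply _ _ _ .univ,
    SignedMeasure.toMeasureOfLEZero_apply _ _ _ .univ,
    ENNReal.toReal_add ENNReal.coe_ne_top ENNReal.coe_ne_top, ENNReal.coe_toReal,
    ENNReal.coe_toReal]
  simp only [Set.inter_univ, NNReal.coe_mk]
  rw [apply_eq P hP, apply_eq _ hP.compl]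
  linarith [(abs_le.1 (h P hP)).2, (abs_le.1 (h _ hP.compl)).1]

/-- Setwise convergence of a sequence of finite measures. -/
def TendstoSetwise {X : Type*} [MeasurableSpace X] (μ : ℕ → Measure X) (ν : Measure X) : Prop :=
  ∀ A, MeasurableSet A → Filter.Tendsto (fun n => (μ n).real A) Filter.atTop (nhds (ν.real A))

section

variable {X : Type*} [MeasurableSpace X]

theorem hasSum_of_tendsto_measureReal {M : Measure X} [IsFiniteMeasure M] {μ : ℕ → Measure X}
    (hle : ∀ n, μ n ≤ M) {L : Set X → ℝ}
    (hL : ∀ A, MeasurableSet A → Filter.Tendsto (fun n => (μ n).real A) Filter.atTop (nhds (L A)))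
    {f : ℕ → Set X} (hf : ∀ i, MeasurableSet (f i)) (hdisj : Pairwise (Function.onFun Disjoint f)) :
    HasSum (fun i => L (f i)) (L (⋃ i, f i)) := by
  have hfin : ∀ n, IsFiniteMeasure (μ n) := fun n => isFiniteMeasure_of_le _ (hle n)
  have hsummable : Summable fun i => M.real (f i) :=
    ENNReal.summable_toReal (measure_iUnion hdisj hf ▸ measure_ne_top M _)
  have hbound : ∀ n i, (μ n).real (f i) ≤ M.real (f i) := fun n i =>
    ENNReal.toReal_mono (measure_ne_top _ _) (hle n _)
  have hlim := tendsto_tsum_of_dominated_convergence (f := fun n i => (μ n).real (f i)) hsummable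
    (fun i => hL (f i) (hf i)) (.of_forall fun n i => by
      rw [Real.norm_of_nonneg measureReal_nonneg]
      exact hbound n i)
  have htsum : ∀ n, ∑' i, (μ n).real (f i) = (μ n).real (⋃ i, f i) := fun n => by
    rw [measureReal_def, measure_iUnion hdisj hf,
      ENNReal.tsum_toReal_eq fun _ => measure_ne_top _ _]
    rfl
  simp_rw [htsum] at hlim
  rw [tendsto_nhds_unique (hL _ (.iUnion hf)) hlim]
  refine (hsummable.of_nonneg_of_le (fun i => ?_) fun i => ?_).hasSum
  · exact ge_of_tendsto' (hL _ (hf i)) fun n => measureReal_nonneg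
  · exact le_of_tendsto' (hL _ (hf i)) fun n => hbound n i

theorem exists_tendstoSetwise {M : Measure X} [IsFiniteMeasure M] {μ : ℕ → Measure X}
    (hle : ∀ n, μ n ≤ M) (hcauchy : ∀ A, MeasurableSet A → CauchySeq fun n => (μ n).real A) :
    ∃ ν ≤ M, TendstoSetwise μ ν := by
  have hlim : ∀ A, ∃ a, MeasurableSet A →
      Filter.Tendsto (fun n => (μ n).real A) Filter.atTop (nhds a) := fun A => by
    by_cases hA : MeasurableSet A
    · exact (cauchySeq_tendsto_of_complete (hcauchy A hA)).imp fun _ ha _ => ha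
    · exact ⟨0, fun h => absurd h hA⟩
  choose L hL using hlim
  have hL0 : ∀ A, MeasurableSet A → 0 ≤ L A := fun A hA =>
    ge_of_tendsto' (hL A hA) fun n => measureReal_nonneg
  have hempty : L ∅ = 0 := tendsto_nhds_unique (hL ∅ .empty) (by simp)
  have hsum := fun (f : ℕ → Set X) hf hdisj =>
    hasSum_of_tendsto_measureReal hle hL (f := f) hf hdisj
  refine ⟨.ofMeasurable (fun A _ => ENNReal.ofReal (L A)) (by rw [hempty, ENNReal.ofReal_zero])
    fun f hf hdisj => ?_, Measure.le_iff.2 fun A hA => ?_, fun A hA => ?_⟩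
  · rw [← (hsum f hf hdisj).tsum_eq]
    exact ENNReal.ofReal_tsum_of_nonneg (fun i => hL0 _ (hf i)) (hsum f hf hdisj).summable
  · rw [Measure.ofMeasurable_apply A hA, ← ofReal_measureReal]
    exact ENNReal.ofReal_le_ofReal <| le_of_tendsto' (hL A hA) fun n =>
      ENNReal.toReal_mono (measure_ne_top _ _) (hle n A)
  · rw [measureReal_def, Measure.ofMeasurable_apply A hA, ENNReal.toReal_ofReal (hL0 A hA)]
    exact hL A hA

end

namespace TendstoSetwise

variable {X : Type*} [MeasurableSpace X] {μ : ℕ → Measure X} {ν : Measure X}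

theorem map (h : TendstoSetwise μ ν) {Y : Type*} [MeasurableSpace Y] {f : X → Y}
    (hf : Measurable f) : TendstoSetwise (fun n => (μ n).map f) (ν.map f) := fun A hA => by
  simp only [map_measureReal_apply hf hA]
  exact h _ (hf hA)

variable [IsFiniteMeasure ν]

theorem unique {ν' : Measure X} [IsFiniteMeasure ν'] (h : TendstoSetwise μ ν)
    (h' : TendstoSetwise μ ν') : ν = ν' :=
  Measure.ext fun A hA =>
    (measureReal_eq_measureReal_iff).1 (tendsto_nhds_unique (h A hA) (h' A hA))

theorem isProbabilityMeasure [∀ n, IsProbabilityMeasure (μ n)] (h : TendstoSetwise μ ν) :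
    IsProbabilityMeasure ν := by
  have huniv := h Set.univ .univ
  simp only [probReal_univ] at huniv
  have hone : ν.real Set.univ = 1 := tendsto_nhds_unique huniv tendsto_const_nhds
  exact ⟨by rw [← ofReal_measureReal, hone, ENNReal.ofReal_one]⟩

theorem le_of_le [∀ n, IsFiniteMeasure (μ n)] (h : TendstoSetwise μ ν) {η : Measure X}
    (hle : ∀ n, η ≤ μ n) : η ≤ ν := Measure.le_iff.2 fun A hA => by
  have : IsFiniteMeasure η := isFiniteMeasure_of_le _ (hle 0)
  refine (ENNReal.toReal_le_toReal (measure_ne_top _ _) (measure_ne_top _ _)).1 ?_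
  exact ge_of_tendsto' (h A hA) fun n => ENNReal.toReal_mono (measure_ne_top _ _) (hle n A)

end TendstoSetwise

theorem withDensity_le_smul {X : Type*} [MeasurableSpace X] {μ : Measure X} {g : X → ℝ≥0∞}
    {c : ℝ≥0∞} (h : ∀ᵐ x ∂μ, g x ≤ c) : μ.withDensity g ≤ c • μ := by
  rw [← withDensity_const]
  exact withDensity_mono h

theorem exists_measure_symmDiff_lt {X : Type*} [mX : MeasurableSpace X] {μ : Measure X}
    [IsFiniteMeasure μ] {𝒜 : Set (Set X)} (h𝒜 : IsSetAlgebra 𝒜) (hmeas : ∀ t ∈ 𝒜, MeasurableSet t)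
    {s : Set X} (hs : ∃ t, MeasurableSet[MeasurableSpace.generateFrom 𝒜] t ∧ s =ᵐ[μ] t) {ε : ℝ}
    (hε : 0 < ε) : ∃ t ∈ 𝒜, μ (symmDiff s t) < ENNReal.ofReal ε := by
  have hle : MeasurableSpace.generateFrom 𝒜 ≤ mX := MeasurableSpace.generateFrom_le hmeas
  obtain ⟨s', hs', hss'⟩ := hs
  let : MeasurableSpace X := MeasurableSpace.generateFrom 𝒜
  obtain ⟨t, ht, hlt⟩ := (Measure.MeasureDense.of_generateFrom_isSetAlgebra_finite (μ.trim hle) h𝒜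
    rfl).approx s' hs' (measure_ne_top _ _) ε hε
  refine ⟨t, ht, ?_⟩
  rwa [trim_measurableSet_eq hle (hs'.symmDiff (MeasurableSpace.measurableSet_generateFrom ht)),
    ← measure_congr (hss'.symmDiff (ae_eq_refl t))] at hlt

/-! ### Geometry of the tower -/

namespace YoungTower

variable {Δ₀ : Type*} [MeasurableSpace Δ₀] (T : YoungTower Δ₀)

instance : IsFiniteMeasure T.m₀ := T.m₀_finite

/-- The embedding of the base as the ground level of the tower. -/
def ground (x : Δ₀) : T.Tower := ⟨(x, 0), T.R_pos x⟩

/-- The time at which a point of the tower next enters the ground level. -/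
def returnTime (p : T.Tower) : ℕ := T.R p.1.1 - p.1.2

/-- The point of the base at which a point of the tower next enters the ground level. -/
def returnPoint (p : T.Tower) : Δ₀ := T.FR p.1.1

theorem measurable_ground : Measurable T.ground :=
  Measurable.subtype_mk (measurable_id.prodMk measurable_const)

theorem measurable_basePoint : Measurable fun p : T.Tower => p.1.1 :=
  measurable_fst.comp measurable_subtype_coe

theorem measurable_level : Measurable fun p : T.Tower => p.1.2 :=
  measurable_snd.comp measurable_subtype_coe

theorem measurable_returnPoint : Measurable T.returnPoint :=
  T.FR_meas.comp T.measurable_basePoint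

theorem measurable_returnTime : Measurable T.returnTime :=
  (T.R_meas.comp T.measurable_basePoint).sub T.measurable_level

theorem measurableSet_returnTime_eq (t : ℕ) : MeasurableSet {p | T.returnTime p = t} :=
  measurableSet_eq_fun T.measurable_returnTime measurable_const

theorem measurableSet_lt_returnTime (t : ℕ) : MeasurableSet {p | t < T.returnTime p} :=
  measurableSet_lt measurable_const T.measurable_returnTime

theorem returnTime_pos (p : T.Tower) : 0 < T.returnTime p := Nat.sub_pos_of_lt p.2

theorem coe_towerMap (p : T.Tower) : (T.towerMap p).1 =
    if p.1.2 + 1 < T.R p.1.1 then (p.1.1, p.1.2 + 1) else (T.FR p.1.1, 0) := by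
  unfold towerMap
  split_ifs <;> rfl

theorem measurable_towerMap : Measurable T.towerMap := by
  suffices Measurable fun p : T.Tower => (T.towerMap p).1 from this.subtype_mk
  simp_rw [coe_towerMap]
  refine Measurable.ite ?_ (T.measurable_basePoint.prodMk (T.measurable_level.add_const 1))
    (T.measurable_returnPoint.prodMk measurable_const)
  exact measurableSet_lt (T.measurable_level.add_const 1) (T.R_meas.comp T.measurable_basePoint)

theorem measurable_iterate (n : ℕ) : Measurable T.towerMap^[n] :=
  T.measurable_towerMap.iterate n

theorem coe_iterate_of_lt_returnTime {n : ℕ} {p : T.Tower} (h : n < T.returnTime p) :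
    (T.towerMap^[n] p).1 = (p.1.1, p.1.2 + n) := by
  unfold returnTime at h
  induction n with
  | zero => rfl
  | succ n ih =>
    rw [Function.iterate_succ_apply', coe_towerMap, ih (by omega)]
    exact if_pos (show p.1.2 + n + 1 < T.R p.1.1 by omega)

theorem coe_towerMap_of_one_lt_returnTime {p : T.Tower} (h : 1 < T.returnTime p) :
    (T.towerMap p).1 = (p.1.1, p.1.2 + 1) :=
  T.coe_iterate_of_lt_returnTime h

theorem iterate_returnTime (p : T.Tower) :
    T.towerMap^[T.returnTime p] p = T.ground (T.returnPoint p) := by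
  obtain ⟨n, hn⟩ := Nat.exists_eq_add_one.2 (T.returnTime_pos p)
  apply Subtype.ext
  rw [hn, Function.iterate_succ_apply', coe_towerMap,
    T.coe_iterate_of_lt_returnTime (hn ▸ n.lt_succ_self)]
  unfold returnTime at hn
  exact if_neg (show ¬ p.1.2 + n + 1 < T.R p.1.1 by omega)

theorem measurableSet_lt_R (l : ℕ) : MeasurableSet {x | l < T.R x} :=
  measurableSet_lt measurable_const T.R_meas

theorem measurableEmbedding_coe : MeasurableEmbedding (Subtype.val : T.Tower → Δ₀ × ℕ) :=
  .subtype_coe (measurableSet_lt measurable_snd (T.R_meas.comp measurable_fst))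

/-- The part of a subset of the tower on the level `l`, as a subset of the base. -/
def slice (A : Set T.Tower) (l : ℕ) : Set Δ₀ := {x | ∃ h : l < T.R x, (⟨(x, l), h⟩ : T.Tower) ∈ A}

theorem slice_eq_preimage_inter (A : Set T.Tower) (l : ℕ) :
    T.slice A l = (fun x => (x, l)) ⁻¹' (Subtype.val '' A) ∩ {x | l < T.R x} := by
  ext x
  simp only [slice, Set.mem_ofPred_eq, Set.mem_inter_iff, Set.mem_preimage, Set.mem_image,
    Subtype.exists, exists_and_right, exists_eq_right]
  exact ⟨fun ⟨h, hA⟩ => ⟨⟨h, hA⟩, h⟩, fun ⟨⟨h, hA⟩, _⟩ => ⟨h, hA⟩⟩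

theorem slice_eq_empty {A : Set T.Tower} {l : ℕ} (h : ∀ p ∈ A, p.1.2 ≠ l) : T.slice A l = ∅ :=
  Set.eq_empty_of_forall_notMem fun _ ⟨_, hx⟩ => h _ hx rfl

theorem slice_zero (A : Set T.Tower) : T.slice A 0 = T.ground ⁻¹' A := by
  ext x
  exact ⟨fun ⟨_, hx⟩ => hx, fun hx => ⟨T.R_pos x, hx⟩⟩

theorem towerMeasure_apply {A : Set T.Tower} (hA : MeasurableSet A) :
    T.towerMeasure A = ∑' l, T.m₀ (T.slice A l) := by
  have hA' := T.measurableEmbedding_coe.measurableSet_image.2 hA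
  unfold towerMeasure
  rw [T.measurableEmbedding_coe.comap_apply, Measure.sum_apply _ hA']
  refine tsum_congr fun l => ?_
  have hl : Measurable fun x : Δ₀ => (x, l) := measurable_id.prodMk measurable_const
  rw [Measure.map_apply hl hA', Measure.restrict_apply (hl hA'), slice_eq_preimage_inter]

theorem towerMeasure_of_level_eq {A : Set T.Tower} (hA : MeasurableSet A) {l : ℕ}
    (h : ∀ p ∈ A, p.1.2 = l) : T.towerMeasure A = T.m₀ (T.slice A l) := by
  rw [T.towerMeasure_apply hA, tsum_eq_single l fun l' hl' => ?_]
  rw [T.slice_eq_empty fun p hp hp' => hl' (hp'.symm.trans (h p hp)), measure_empty]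

theorem slice_preimage_towerMap (A : Set T.Tower) (l : ℕ) :
    T.slice (T.towerMap ⁻¹' A ∩ {p | 1 < T.returnTime p}) l = T.slice A (l + 1) := by
  have towerMap_eq {x : Δ₀} (hl : l < T.R x) (h : l + 1 < T.R x) :
      T.towerMap ⟨(x, l), hl⟩ = ⟨(x, l + 1), h⟩ := dif_pos h
  ext x
  constructor
  · rintro ⟨hl, hA, hp⟩
    have h : l + 1 < T.R x := by
      change 1 < T.R x - l at hp
      omega
    exact ⟨h, towerMap_eq hl h ▸ hA⟩
  · rintro ⟨h, hA⟩
    have hl : l < T.R x := by omega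
    refine ⟨hl, Set.mem_preimage.2 ((towerMap_eq hl h).symm ▸ hA), ?_⟩
    change 1 < T.R x - l
    omega

theorem measurableSet_preimage_towerMap {A : Set T.Tower} (hA : MeasurableSet A) :
    MeasurableSet (T.towerMap ⁻¹' A ∩ {p | 1 < T.returnTime p}) :=
  (T.measurable_towerMap hA).inter (T.measurableSet_lt_returnTime 1)

theorem towerMeasure_eq_ground_add {A : Set T.Tower} (hA : MeasurableSet A) :
    T.towerMeasure A = T.m₀ (T.ground ⁻¹' A) +
      T.towerMeasure (T.towerMap ⁻¹' A ∩ {p | 1 < T.returnTime p}) := by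
  rw [T.towerMeasure_apply hA, T.towerMeasure_apply (T.measurableSet_preimage_towerMap hA),
    tsum_eq_zero_add' ENNReal.summable, slice_zero]
  simp_rw [slice_preimage_towerMap]

theorem map_ground_le : T.m₀.map T.ground ≤ T.towerMeasure := by
  refine Measure.le_iff.2 fun A hA => ?_
  rw [Measure.map_apply T.measurable_ground hA, T.towerMeasure_eq_ground_add hA]
  exact le_self_add

theorem exists_mem_I : ∃ i, i ∈ T.I := by
  by_contra! h
  exact absurd (T.Ret_gcd 2 fun i hi => absurd hi (h i)) (by norm_num)

theorem m₀_univ_ne_zero : T.m₀ Set.univ ≠ 0 :=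
  let ⟨i, hi⟩ := T.exists_mem_I
  ((T.Λ_pos i hi).trans_le (measure_mono (Set.subset_univ _))).ne'

theorem measurableSet_pieceSet (l : ℕ) {i : ℕ} (hi : i ∈ T.I) :
    MeasurableSet (T.pieceSet l i) :=
  (measurableSet_eq_fun T.measurable_level measurable_const).inter
    (T.measurable_basePoint (T.Λ_meas i hi))

theorem pairwise_disjoint_pieceSet :
    Pairwise (Function.onFun Disjoint fun c : ℕ × T.I => T.pieceSet c.1 c.2) := by
  rintro ⟨l, i⟩ ⟨l', i'⟩ hne
  refine Set.disjoint_left.2 fun p hp hq => hne ?_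
  obtain rfl : l = l' := hp.1.symm.trans hq.1
  obtain rfl : i = i' := by
    by_contra hi
    exact Set.disjoint_left.1 (T.Λ_disj i.2 i'.2 (Subtype.coe_ne_coe.2 hi)) hp.2 hq.2
  rfl

theorem towerMeasure_compl_iUnion_pieceSet :
    T.towerMeasure (⋃ c : ℕ × T.I, T.pieceSet c.1 c.2)ᶜ = 0 := by
  have hmeas : MeasurableSet (⋃ c : ℕ × T.I, T.pieceSet c.1 c.2) :=
    MeasurableSet.iUnion fun c => T.measurableSet_pieceSet c.1 c.2.2
  rw [T.towerMeasure_apply hmeas.compl, ENNReal.tsum_eq_zero]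
  refine fun l => measure_mono_null ?_ T.Λ_full
  rintro x ⟨h, hx⟩
  refine ⟨trivial, fun hmem => hx ?_⟩
  obtain ⟨i, hi, hxi⟩ := Set.mem_iUnion₂.1 hmem
  exact Set.mem_iUnion.2 ⟨(l, ⟨i, hi⟩), rfl, hxi⟩

theorem sum_restrict_pieceSet {μ : Measure T.Tower} (h : μ ≪ T.towerMeasure) :
    (Measure.sum fun c : ℕ × T.I => μ.restrict (T.pieceSet c.1 c.2)) = μ := by
  rw [← Measure.restrict_iUnion T.pairwise_disjoint_pieceSet
    fun c => T.measurableSet_pieceSet c.1 c.2.2]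
  exact Measure.restrict_eq_self_of_ae_mem (h T.towerMeasure_compl_iUnion_pieceSet)

theorem returnTime_eq_of_mem_pieceSet {l i : ℕ} (hi : i ∈ T.I) {p : T.Tower}
    (hp : p ∈ T.pieceSet l i) : T.returnTime p = T.Ret i - l := by
  rw [returnTime, hp.1, T.R_eq i hi _ hp.2]

theorem towerMeasure_preimage_returnPoint {l i : ℕ} (hi : i ∈ T.I) (hl : l < T.Ret i)
    {A : Set Δ₀} (hA : MeasurableSet A) :
    T.towerMeasure (T.returnPoint ⁻¹' A ∩ T.pieceSet l i) = T.m₀ (T.Λ i ∩ T.FR ⁻¹' A) := by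
  rw [T.towerMeasure_of_level_eq
    ((T.measurable_returnPoint hA).inter (T.measurableSet_pieceSet l hi)) fun p hp => hp.2.1]
  congr 1
  ext x
  exact ⟨fun ⟨_, hx, _, hi⟩ => ⟨hi, hx⟩,
    fun ⟨hxi, hx⟩ => ⟨(T.R_eq i hi x hxi).symm ▸ hl, hx, rfl, hxi⟩⟩

/-! ### Separation times -/

theorem le_sepTime_iff {x y : Δ₀} {k : ℕ} : (k : ℕ∞) ≤ sepTime T.I T.Λ T.FR x y ↔
    ∀ n < k, ∃ i ∈ T.I, T.FR^[n] x ∈ T.Λ i ∧ T.FR^[n] y ∈ T.Λ i := by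
  simp only [sepTime, le_iInf_iff, Nat.cast_le, Set.mem_ofPred_eq]
  refine forall_congr' fun n => ?_
  rw [← not_lt, not_imp_not]

theorem le_sepTime_comm {x y : Δ₀} {k : ℕ} :
    (k : ℕ∞) ≤ sepTime T.I T.Λ T.FR x y ↔ (k : ℕ∞) ≤ sepTime T.I T.Λ T.FR y x := by
  simp only [le_sepTime_iff, and_comm]

theorem succ_le_sepTime {x y : Δ₀} {k i : ℕ} (hi : i ∈ T.I) (hx : x ∈ T.Λ i) (hy : y ∈ T.Λ i)
    (h : (k : ℕ∞) ≤ sepTime T.I T.Λ T.FR (T.FR x) (T.FR y)) :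
    ((k + 1 : ℕ) : ℕ∞) ≤ sepTime T.I T.Λ T.FR x y := by
  rw [le_sepTime_iff] at h ⊢
  rintro (_ | n) hn
  · exact ⟨i, hi, hx, hy⟩
  · simpa only [Function.iterate_succ_apply] using h n (by omega)

theorem le_sepTower_iff {p q : T.Tower} {k : ℕ} (hk : 1 ≤ k) :
    (k : ℕ∞) ≤ T.sepTower p q ↔
      p.1.2 = q.1.2 ∧ (k : ℕ∞) ≤ sepTime T.I T.Λ T.FR p.1.1 q.1.1 := by
  unfold sepTower
  split_ifs with h
  · obtain ⟨l, i, -, hp, hq⟩ := h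
    exact (and_iff_right (hp.1.trans hq.1.symm)).symm
  · refine iff_of_false (by simpa using Nat.ne_of_gt hk) fun ⟨hlevel, hsep⟩ => h ?_
    obtain ⟨i, hi, hp, hq⟩ := T.le_sepTime_iff.1 hsep 0 hk
    exact ⟨q.1.2, i, hi, ⟨hlevel, hp⟩, ⟨rfl, hq⟩⟩

theorem epow_le {s : ℕ∞} {k : ℕ} (h : (k : ℕ∞) ≤ s) : epow T.β s ≤ T.β ^ k := by
  unfold epow
  split_ifs with hs
  · exact pow_nonneg T.β_pos.le k
  · refine pow_le_pow_of_le_one T.β_pos.le T.β_lt_one.le ?_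
    lift s to ℕ using hs
    exact_mod_cast h

end YoungTower

/-! ### Bounded distortion of measures -/

namespace YoungTower

variable {Δ₀ : Type*} [MeasurableSpace Δ₀] (T : YoungTower Δ₀)

/-- The distortion factor `exp (K β ^ k)` allowed on cylinders of length `k`. -/
def distortionFactor (K : ℝ) (k : ℕ) : ℝ≥0∞ := ENNReal.ofReal (Real.exp (K * T.β ^ k))

theorem distortionFactor_ne_top (K : ℝ) (k : ℕ) : T.distortionFactor K k ≠ ∞ :=
  ENNReal.ofReal_ne_top

theorem one_le_distortionFactor {K : ℝ} (hK : 0 ≤ K) (k : ℕ) : 1 ≤ T.distortionFactor K k :=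
  ENNReal.one_le_ofReal.2 (Real.one_le_exp (mul_nonneg hK (pow_nonneg T.β_pos.le k)))

theorem distortionFactor_mono : Monotone T.distortionFactor := fun _ _ h k =>
  ENNReal.ofReal_le_ofReal (Real.exp_le_exp.2
    (mul_le_mul_of_nonneg_right h (pow_nonneg T.β_pos.le k)))

theorem distortionFactor_mul (K K' : ℝ) (k : ℕ) :
    T.distortionFactor K (k + 1) * T.distortionFactor K' k =
      T.distortionFactor (K * T.β + K') k := by
  simp only [distortionFactor]
  rw [← ENNReal.ofReal_mul (Real.exp_pos _).le, ← Real.exp_add]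
  ring_nf

theorem ofReal_JFR_le {i k : ℕ} (hi : i ∈ T.I) {x y : Δ₀} (hx : x ∈ T.Λ i) (hy : y ∈ T.Λ i)
    (h : (k : ℕ∞) ≤ sepTime T.I T.Λ T.FR (T.FR x) (T.FR y)) :
    ENNReal.ofReal (T.JFR x) ≤ T.distortionFactor T.CF k * ENNReal.ofReal (T.JFR y) := by
  have hJx := T.JFR_pos i hi x hx
  have hJy := T.JFR_pos i hi y hy
  rw [distortionFactor, ← ENNReal.ofReal_mul (Real.exp_pos _).le]
  refine ENNReal.ofReal_le_ofReal ?_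
  rw [← div_le_iff₀ hJy, ← Real.log_le_iff_le_exp (div_pos hJx hJy)]
  exact (le_abs_self _).trans ((T.distortion i hi x hx y hy).trans
    (mul_le_mul_of_nonneg_left (T.epow_le h) T.CF_pos.le))

theorem m₀_eq_setLIntegral_JFR {i : ℕ} (hi : i ∈ T.I) {A : Set Δ₀} (hA : MeasurableSet A) :
    T.m₀ A = ∫⁻ x in T.Λ i ∩ T.FR ⁻¹' A, ENNReal.ofReal (T.JFR x) ∂T.m₀ := by
  rw [← T.JFR_jac i hi _ Set.inter_subset_left ((T.Λ_meas i hi).inter (T.FR_meas hA)),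
    Set.image_inter_preimage, (T.FR_bij i hi).image_eq, Set.univ_inter]

theorem m₀_eq_zero_of_branch {i : ℕ} (hi : i ∈ T.I) {A : Set Δ₀} (hA : MeasurableSet A)
    (h : T.m₀ (T.Λ i ∩ T.FR ⁻¹' A) = 0) : T.m₀ A = 0 := by
  rw [T.m₀_eq_setLIntegral_JFR hi hA]
  exact setLIntegral_measure_zero _ _ h

/-- `x` and `y` lie in a common cylinder of length `k` of the base. -/
def SameBaseCylinder (k : ℕ) (x y : Δ₀) : Prop := (k : ℕ∞) ≤ sepTime T.I T.Λ T.FR x y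

/-- `p` and `q` lie on a common level over a common cylinder of length `k` of the base. For `k = 0`
this only says that they lie on a common level. -/
def SameCylinder (k : ℕ) (p q : T.Tower) : Prop :=
  p.1.2 = q.1.2 ∧ T.SameBaseCylinder k p.1.1 q.1.1

theorem sameBaseCylinder_zero (x y : Δ₀) : T.SameBaseCylinder 0 x y := by
  simp [SameBaseCylinder]

theorem branch_distortion {i k : ℕ} (hi : i ∈ T.I) {A A' : Set Δ₀} (hA : MeasurableSet A)
    (hA' : MeasurableSet A') (h : ∀ x ∈ A, ∀ y ∈ A', T.SameBaseCylinder k x y) :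
    T.m₀ (T.Λ i ∩ T.FR ⁻¹' A) * T.m₀ A' ≤
      T.distortionFactor T.CF k * (T.m₀ (T.Λ i ∩ T.FR ⁻¹' A') * T.m₀ A) := by
  set P := T.Λ i ∩ T.FR ⁻¹' A
  set P' := T.Λ i ∩ T.FR ⁻¹' A'
  have hP : MeasurableSet P := (T.Λ_meas i hi).inter (T.FR_meas hA)
  have hP' : MeasurableSet P' := (T.Λ_meas i hi).inter (T.FR_meas hA')
  have hJ : Measurable fun x => ENNReal.ofReal (T.JFR x) := T.JFR_meas.ennreal_ofReal
  have pointwise : ∀ x ∈ P,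
      T.m₀ A' ≤ T.distortionFactor T.CF k * (T.m₀ P' * ENNReal.ofReal (T.JFR x)) := by
    intro x hx
    rw [T.m₀_eq_setLIntegral_JFR hi hA']
    calc ∫⁻ y in P', ENNReal.ofReal (T.JFR y) ∂T.m₀
        ≤ ∫⁻ _ in P', T.distortionFactor T.CF k * ENNReal.ofReal (T.JFR x) ∂T.m₀ :=
          setLIntegral_mono' hP' fun y hy =>
            T.ofReal_JFR_le hi hy.1 hx.1 (T.le_sepTime_comm.1 (h _ hx.2 _ hy.2))
      _ = _ := by rw [setLIntegral_const]; ring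
  calc T.m₀ P * T.m₀ A' = ∫⁻ _ in P, T.m₀ A' ∂T.m₀ := by rw [setLIntegral_const, mul_comm]
    _ ≤ ∫⁻ x in P, T.distortionFactor T.CF k * (T.m₀ P' * ENNReal.ofReal (T.JFR x)) ∂T.m₀ :=
        setLIntegral_mono' hP pointwise
    _ = T.distortionFactor T.CF k * (T.m₀ P' * T.m₀ A) := by
        rw [lintegral_const_mul _ (hJ.const_mul _), lintegral_const_mul _ hJ,
          ← T.m₀_eq_setLIntegral_JFR hi hA]

/-- Regularity of a measure on the base, with distortion factors `exp (K β ^ k)`, `k ≥ j`. -/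
def BaseRegular (K : ℝ) : ℕ → Measure Δ₀ → Prop :=
  HasDistortion T.SameBaseCylinder (T.distortionFactor K) T.m₀

/-- Regularity of a measure on the tower, with distortion factors `exp (K β ^ k)`, `k ≥ j`. -/
def TowerRegular (K : ℝ) : ℕ → Measure T.Tower → Prop :=
  HasDistortion T.SameCylinder (T.distortionFactor K) T.towerMeasure

variable {T} {K : ℝ} {j : ℕ}

theorem TowerRegular.map_returnPoint_restrict_pieceSet {μ : Measure T.Tower}
    (h : T.TowerRegular K (j + 1) μ) {l i : ℕ} (hi : i ∈ T.I) (hl : l < T.Ret i) :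
    T.BaseRegular (K * T.β + T.CF) j ((μ.restrict (T.pieceSet l i)).map T.returnPoint) := by
  intro k hk A A' hA hA' hr
  have hrp := T.measurable_returnPoint
  have hpiece := T.measurableSet_pieceSet l hi
  rw [Measure.map_apply hrp hA, Measure.map_apply hrp hA', Measure.restrict_apply (hrp hA),
    Measure.restrict_apply (hrp hA')]
  set P := T.returnPoint ⁻¹' A ∩ T.pieceSet l i
  set P' := T.returnPoint ⁻¹' A' ∩ T.pieceSet l i
  set a := T.m₀ (T.Λ i ∩ T.FR ⁻¹' A)
  set a' := T.m₀ (T.Λ i ∩ T.FR ⁻¹' A')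
  have hP : μ P * a' ≤ T.distortionFactor K (k + 1) * (μ P' * a) := by
    have := h (k + 1) (by omega) P P' ((hrp hA).inter hpiece) ((hrp hA').inter hpiece)
      fun p hp q hq => ⟨hp.2.1.trans hq.2.1.symm,
        T.succ_le_sepTime hi hp.2.2 hq.2.2 (hr _ hp.1 _ hq.1)⟩
    rwa [T.towerMeasure_preimage_returnPoint hi hl hA,
      T.towerMeasure_preimage_returnPoint hi hl hA'] at this
  by_cases ha' : a' = 0
  · simp [T.m₀_eq_zero_of_branch hi hA' ha']
  refine (ENNReal.mul_le_mul_iff_right ha' (measure_ne_top _ _)).1 ?_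
  calc a' * (μ P * T.m₀ A') = μ P * a' * T.m₀ A' := by ring
    _ ≤ T.distortionFactor K (k + 1) * (μ P' * a) * T.m₀ A' := by gcongr
    _ = T.distortionFactor K (k + 1) * μ P' * (a * T.m₀ A') := by ring
    _ ≤ T.distortionFactor K (k + 1) * μ P' *
          (T.distortionFactor T.CF k * (a' * T.m₀ A)) := by
        gcongr _ * ?_
        exact T.branch_distortion hi hA hA' hr
    _ = a' * (T.distortionFactor K (k + 1) * T.distortionFactor T.CF k * (μ P' * T.m₀ A)) := by
        ring
    _ = _ := by rw [distortionFactor_mul]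

/-- Cylinders grow by one symbol when pulled back along the return, which contracts `K` by `β`;
the Jacobian of the return contributes `C_F`. -/
theorem TowerRegular.map_returnPoint {μ : Measure T.Tower} (hac : μ ≪ T.towerMeasure)
    (h : T.TowerRegular K (j + 1) μ) (t : ℕ) :
    T.BaseRegular (K * T.β + T.CF) j
      ((μ.restrict {p | T.returnTime p = t}).map T.returnPoint) := by
  have hsum : (μ.restrict {p | T.returnTime p = t}).map T.returnPoint =
      Measure.sum fun c : ℕ × T.I => ((μ.restrict (T.pieceSet c.1 c.2)).restrict
        {p | T.returnTime p = t}).map T.returnPoint := by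
    rw [← Measure.map_sum T.measurable_returnPoint.aemeasurable,
      ← Measure.restrict_sum _ (T.measurableSet_returnTime_eq t), T.sum_restrict_pieceSet hac]
  rw [hsum]
  refine HasDistortion.sum ?_
  rintro ⟨l, i, hi⟩
  have hrt : ∀ p ∈ T.pieceSet l i, T.returnTime p = T.Ret i - l := fun p hp =>
    T.returnTime_eq_of_mem_pieceSet hi hp
  dsimp only
  rw [Measure.restrict_restrict (T.measurableSet_returnTime_eq t)]
  by_cases hl : l < T.Ret i ∧ T.Ret i - l = t
  · have hinter : {p | T.returnTime p = t} ∩ T.pieceSet l i = T.pieceSet l i :=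
      Set.inter_eq_right.2 fun p hp => (hrt p hp).trans hl.2
    rw [hinter]
    exact h.map_returnPoint_restrict_pieceSet hi hl.1
  · have hempty : {p | T.returnTime p = t} ∩ T.pieceSet l i = ∅ := by
      refine Set.eq_empty_of_forall_notMem fun p ⟨hpt, hp⟩ => hl ?_
      have hpos := T.returnTime_pos p
      rw [hrt p hp] at hpos
      exact ⟨by omega, (hrt p hp).symm.trans hpt⟩
    intro k _ A A' _ _ _
    simp [hempty]

theorem TowerRegular.of_level {μ : Measure T.Tower}
    (h : ∀ k, j ≤ k → ∀ A A', MeasurableSet A → MeasurableSet A' →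
      (∀ p ∈ A, ∀ q ∈ A', T.SameCylinder k p q) →
      ∀ l, (∀ p ∈ A, p.1.2 = l) → (∀ p ∈ A', p.1.2 = l) →
      μ A * T.towerMeasure A' ≤ T.distortionFactor K k * (μ A' * T.towerMeasure A)) :
    T.TowerRegular K j μ := by
  intro k hj A A' hA hA' hr
  obtain rfl | ⟨p, hp⟩ := A.eq_empty_or_nonempty
  · simp
  obtain rfl | ⟨q, hq⟩ := A'.eq_empty_or_nonempty
  · simp
  refine h k hj A A' hA hA' hr p.1.2 (fun p' hp' => ?_) fun q' hq' => (hr p hp q' hq').1.symm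
  rw [(hr p' hp' q hq).1, (hr p hp q hq).1]

theorem BaseRegular.map_ground {μ : Measure Δ₀} (h : T.BaseRegular K j μ) :
    T.TowerRegular K j (μ.map T.ground) := by
  refine .of_level fun k hj A A' hA hA' hr l hl hl' => ?_
  rw [Measure.map_apply T.measurable_ground hA, Measure.map_apply T.measurable_ground hA']
  by_cases h0 : l = 0
  · subst h0
    rw [T.towerMeasure_of_level_eq hA hl, T.towerMeasure_of_level_eq hA' hl', slice_zero,
      slice_zero]
    exact h k hj _ _ (T.measurable_ground hA) (T.measurable_ground hA')
      fun x hx y hy => (hr _ hx _ hy).2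
  · rw [Set.eq_empty_of_forall_notMem fun x (hx : x ∈ T.ground ⁻¹' A) => h0 (hl _ hx).symm]
    simp

theorem TowerRegular.map_towerMap {μ : Measure T.Tower} (h : T.TowerRegular K j μ) :
    T.TowerRegular K j ((μ.restrict {p | 1 < T.returnTime p}).map T.towerMap) := by
  refine .of_level fun k hj A A' hA hA' hr l hl hl' => ?_
  have hF := T.measurable_towerMap
  rw [Measure.map_apply hF hA, Measure.map_apply hF hA', Measure.restrict_apply (hF hA),
    Measure.restrict_apply (hF hA')]
  by_cases h0 : l = 0
  · have hempty : T.towerMap ⁻¹' A ∩ {p | 1 < T.returnTime p} = ∅ := by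
      refine Set.eq_empty_of_forall_notMem fun p ⟨hpA, hp⟩ => ?_
      have := hl _ hpA
      rw [T.coe_towerMap_of_one_lt_returnTime hp, h0] at this
      exact Nat.succ_ne_zero _ this
    simp [hempty]
  · have towerMeasure_eq : ∀ A : Set T.Tower, MeasurableSet A → (∀ p ∈ A, p.1.2 = l) →
        T.towerMeasure A = T.towerMeasure (T.towerMap ⁻¹' A ∩ {p | 1 < T.returnTime p}) := by
      intro A hA hl
      rw [T.towerMeasure_eq_ground_add hA, ← slice_zero,
        T.slice_eq_empty fun p hp => hl p hp ▸ h0, measure_empty, zero_add]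
    rw [towerMeasure_eq A hA hl, towerMeasure_eq A' hA' hl']
    refine h k hj _ _ (T.measurableSet_preimage_towerMap hA)
      (T.measurableSet_preimage_towerMap hA') fun p hp q hq => ?_
    have hpq := hr _ hp.1 _ hq.1
    rw [SameCylinder, T.coe_towerMap_of_one_lt_returnTime hp.2,
      T.coe_towerMap_of_one_lt_returnTime hq.2] at hpq
    exact ⟨Nat.succ_injective hpq.1, hpq.2⟩

end YoungTower

/-! ### Evolution of tame measures -/

namespace YoungTower

variable {Δ₀ : Type*} [MeasurableSpace Δ₀] (T : YoungTower Δ₀)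

/-- The regularity constant allowed before a return to the base. It is chosen larger than the fixed
point `C_F / (1 - β)` of `K ↦ K β + C_F`, so that every return improves it. -/
def looseConst : ℝ := 2 * T.CF / (1 - T.β)

/-- The regularity constant which holds after a return to the base. -/
def tightConst : ℝ := T.looseConst * T.β + T.CF

theorem looseConst_pos : 0 < T.looseConst :=
  div_pos (mul_pos two_pos T.CF_pos) (sub_pos.2 T.β_lt_one)

theorem tightConst_eq : T.tightConst = (1 + T.β) / 2 * T.looseConst := by
  have : 1 - T.β ≠ 0 := (sub_pos.2 T.β_lt_one).ne'
  unfold tightConst looseConst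
  field_simp
  ring

theorem tightConst_le_looseConst : T.tightConst ≤ T.looseConst := by
  rw [tightConst_eq]
  nlinarith [T.looseConst_pos, T.β_lt_one]

theorem tightConst_nonneg : 0 ≤ T.tightConst := by
  rw [tightConst_eq]
  exact mul_nonneg (by linarith [T.β_pos]) T.looseConst_pos.le

/-- The bound for the densities of tame probability measures. -/
def densityBound : ℝ≥0∞ := T.distortionFactor T.tightConst 0 / T.m₀ Set.univ

theorem densityBound_ne_top : T.densityBound ≠ ∞ :=
  ENNReal.div_ne_top (T.distortionFactor_ne_top _ _) T.m₀_univ_ne_zero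

theorem one_le_densityBound_mul : 1 ≤ T.densityBound * T.m₀ Set.univ := by
  rw [densityBound, ENNReal.div_mul_cancel T.m₀_univ_ne_zero (measure_ne_top _ _)]
  exact T.one_le_distortionFactor T.tightConst_nonneg 0

/-- Regular measures on the tower with a density which is bounded in terms of the mass. This class
is invariant under the tower map. -/
structure IsTame (μ : Measure T.Tower) : Prop where
  regular : T.TowerRegular T.tightConst 1 μ
  le_smul : μ ≤ (T.densityBound * μ Set.univ) • T.towerMeasure

/-- The push-forward of a measure by the `n`-th iterate of the tower map. -/
def push (n : ℕ) (μ : Measure T.Tower) : Measure T.Tower := μ.map T.towerMap^[n]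

theorem push_zero (μ : Measure T.Tower) : T.push 0 μ = μ := Measure.map_id

theorem push_apply (n : ℕ) (μ : Measure T.Tower) {A : Set T.Tower} (hA : MeasurableSet A) :
    T.push n μ A = μ (T.towerMap^[n] ⁻¹' A) := Measure.map_apply (T.measurable_iterate n) hA

theorem push_univ (n : ℕ) (μ : Measure T.Tower) : T.push n μ Set.univ = μ Set.univ :=
  T.push_apply n μ .univ

theorem push_push (a b : ℕ) (μ : Measure T.Tower) : T.push a (T.push b μ) = T.push (a + b) μ := by
  unfold push
  rw [Measure.map_map (T.measurable_iterate a) (T.measurable_iterate b), Function.iterate_add]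

theorem push_comm (a b : ℕ) (μ : Measure T.Tower) :
    T.push a (T.push b μ) = T.push b (T.push a μ) := by
  rw [push_push, push_push, add_comm]

theorem push_sum {ι : Type*} (n : ℕ) (μ : ι → Measure T.Tower) :
    T.push n (Measure.sum μ) = Measure.sum fun i => T.push n (μ i) :=
  Measure.map_sum (T.measurable_iterate n).aemeasurable

theorem push_add (n : ℕ) (μ ν : Measure T.Tower) :
    T.push n (μ + ν) = T.push n μ + T.push n ν := Measure.map_add _ _ (T.measurable_iterate n)

theorem push_smul (n : ℕ) (c : ℝ≥0∞) (μ : Measure T.Tower) :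
    T.push n (c • μ) = c • T.push n μ := Measure.map_smul _ _ _

theorem push_mono (n : ℕ) {μ ν : Measure T.Tower} (h : μ ≤ ν) : T.push n μ ≤ T.push n ν :=
  Measure.map_mono h (T.measurable_iterate n)

instance (n : ℕ) (μ : Measure T.Tower) [IsFiniteMeasure μ] : IsFiniteMeasure (T.push n μ) :=
  Measure.isFiniteMeasure_map μ _

/-- The part of a measure on the tower which enters the base at time `t`, as a measure on the
base. -/
def arrival (t : ℕ) (μ : Measure T.Tower) : Measure Δ₀ :=
  (μ.restrict {p | T.returnTime p = t}).map T.returnPoint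

theorem arrival_mono (t : ℕ) {μ ν : Measure T.Tower} (h : μ ≤ ν) : T.arrival t μ ≤ T.arrival t ν :=
  Measure.map_mono (Measure.restrict_mono le_rfl h) T.measurable_returnPoint

theorem map_ground_univ (μ : Measure Δ₀) : μ.map T.ground Set.univ = μ Set.univ :=
  Measure.map_apply T.measurable_ground .univ

theorem push_restrict_returnTime (t : ℕ) (μ : Measure T.Tower) :
    T.push t (μ.restrict {p | T.returnTime p = t}) = (T.arrival t μ).map T.ground := by
  unfold push arrival
  rw [Measure.map_map T.measurable_ground T.measurable_returnPoint]
  refine Measure.map_congr ?_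
  filter_upwards [ae_restrict_mem (T.measurableSet_returnTime_eq t)] with p hp
  exact hp ▸ T.iterate_returnTime p

theorem arrival_univ (t : ℕ) (μ : Measure T.Tower) :
    T.arrival t μ Set.univ = μ {p | T.returnTime p = t} := by
  rw [arrival, Measure.map_apply T.measurable_returnPoint .univ, Set.preimage_univ,
    Measure.restrict_apply_univ]

theorem tsum_arrival_univ (μ : Measure T.Tower) :
    ∑' t, T.arrival t μ Set.univ = μ Set.univ := by
  conv_rhs => rw [← sum_restrict_fiber μ T.measurable_returnTime, Measure.sum_apply _ .univ]
  simp_rw [arrival_univ, Measure.restrict_apply_univ]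

/-- The part of the push-forward of a measure by the `h`-th iterate of the tower map which has
returned to the base by time `h`. -/
def returned (h : ℕ) (μ : Measure T.Tower) : Measure T.Tower :=
  Measure.sum fun t : Set.Iic h => T.push (h - t) ((T.arrival t μ).map T.ground)

theorem push_eq_returned_add (h : ℕ) (μ : Measure T.Tower) :
    T.push h μ = T.returned h μ + T.push h (μ.restrict {p | h < T.returnTime p}) := by
  have hcompl : {p | h < T.returnTime p}ᶜ = ⋃ t : Set.Iic h, {p | T.returnTime p = t} := by
    ext p
    simp
  have hdisj : Pairwise (Function.onFun Disjoint
      fun t : Set.Iic h => {p : T.Tower | T.returnTime p = t}) := fun t t' hne =>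
    Set.disjoint_left.2 fun p hp hp' => hne (Subtype.ext (hp.symm.trans hp'))
  conv_lhs => rw [← Measure.restrict_compl_add_restrict (μ := μ) (T.measurableSet_lt_returnTime h),
    T.push_add, hcompl, Measure.restrict_iUnion hdisj fun t => T.measurableSet_returnTime_eq t,
    T.push_sum]
  congr 2
  funext t
  rw [← T.push_restrict_returnTime, T.push_push, Nat.sub_add_cancel t.2]

variable {T}

theorem TowerRegular.arrival {j : ℕ} {μ : Measure T.Tower} (hac : μ ≪ T.towerMeasure)
    (h : T.TowerRegular T.looseConst (j + 1) μ) (t : ℕ) :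
    T.BaseRegular T.tightConst j (T.arrival t μ) := h.map_returnPoint hac t

theorem TowerRegular.loosen {j : ℕ} {μ : Measure T.Tower} (h : T.TowerRegular T.tightConst j μ) :
    T.TowerRegular T.looseConst j μ :=
  h.mono (T.distortionFactor_mono T.tightConst_le_looseConst) le_rfl

theorem BaseRegular.le_smul {μ : Measure Δ₀} (h : T.BaseRegular T.tightConst 0 μ) :
    μ ≤ (T.densityBound * μ Set.univ) • T.m₀ :=
  HasDistortion.le_smul h le_rfl T.sameBaseCylinder_zero T.m₀_univ_ne_zero

theorem BaseRegular.isTame {μ : Measure Δ₀} (h : T.BaseRegular T.tightConst 0 μ) :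
    T.IsTame (μ.map T.ground) := by
  refine ⟨h.map_ground.mono le_rfl zero_le_one, ?_⟩
  rw [map_ground_univ]
  calc μ.map T.ground ≤ ((T.densityBound * μ Set.univ) • T.m₀).map T.ground :=
        Measure.map_mono h.le_smul T.measurable_ground
    _ = (T.densityBound * μ Set.univ) • T.m₀.map T.ground := Measure.map_smul _ _ _
    _ ≤ _ := Measure.le_iff.2 fun A _ => mul_le_mul_right (T.map_ground_le A) _

namespace IsTame

theorem absolutelyContinuous {μ : Measure T.Tower} (h : T.IsTame μ) : μ ≪ T.towerMeasure :=
  Measure.absolutelyContinuous_of_le_smul h.le_smul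

theorem absolutelyContinuous_of_le {μ ν : Measure T.Tower} (h : T.IsTame ν) (hle : μ ≤ ν) :
    μ ≪ T.towerMeasure :=
  (Measure.absolutelyContinuous_of_le hle).trans h.absolutelyContinuous

theorem sum {ι : Type*} {μ : ι → Measure T.Tower} (h : ∀ i, T.IsTame (μ i)) :
    T.IsTame (Measure.sum μ) := by
  refine ⟨HasDistortion.sum fun i => (h i).regular, Measure.le_iff.2 fun A hA => ?_⟩
  rw [Measure.smul_apply, smul_eq_mul, Measure.sum_apply _ hA, Measure.sum_apply _ .univ,
    ← ENNReal.tsum_mul_left, ← ENNReal.tsum_mul_right]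
  exact ENNReal.tsum_le_tsum fun i => (h i).le_smul A

theorem add {μ ν : Measure T.Tower} (hμ : T.IsTame μ) (hν : T.IsTame ν) : T.IsTame (μ + ν) := by
  refine ⟨hμ.regular.add hν.regular, Measure.le_iff.2 fun A _ => ?_⟩
  rw [Measure.smul_apply, smul_eq_mul, Measure.add_apply, Measure.add_apply, mul_add, add_mul]
  exact add_le_add (hμ.le_smul A) (hν.le_smul A)

theorem smul {μ : Measure T.Tower} (h : T.IsTame μ) (c : ℝ≥0∞) : T.IsTame (c • μ) := by
  refine ⟨h.regular.smul c, Measure.le_iff.2 fun A _ => ?_⟩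
  rw [Measure.smul_apply, smul_eq_mul, Measure.smul_apply, smul_eq_mul, Measure.smul_apply,
    smul_eq_mul, mul_left_comm, mul_assoc]
  exact mul_le_mul_right (h.le_smul A) c

theorem arrival {μ : Measure T.Tower} (h : T.IsTame μ) (t : ℕ) :
    T.BaseRegular T.tightConst 0 (T.arrival t μ) :=
  h.regular.loosen.arrival h.absolutelyContinuous t

theorem push_one {μ : Measure T.Tower} (h : T.IsTame μ) : T.IsTame (T.push 1 μ) := by
  have hF := T.measurable_towerMap
  have hsplit : T.push 1 μ = (T.arrival 1 μ).map T.ground +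
      (μ.restrict {p | 1 < T.returnTime p}).map T.towerMap := by
    have hcompl : {p | 1 < T.returnTime p}ᶜ = {p | T.returnTime p = 1} := by
      ext p
      have := T.returnTime_pos p
      change ¬1 < T.returnTime p ↔ T.returnTime p = 1
      lia
    rw [← T.push_restrict_returnTime, ← hcompl]
    conv_lhs => rw [← Measure.restrict_compl_add_restrict (μ := μ)
      (T.measurableSet_lt_returnTime 1), T.push_add]
    rfl
  refine ⟨?_, Measure.le_iff.2 fun A hA => ?_⟩
  · rw [hsplit]
    exact (h.arrival 1).isTame.regular.add h.regular.map_towerMap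
  · rw [T.push_univ, Measure.smul_apply, smul_eq_mul, T.towerMeasure_eq_ground_add hA, mul_add,
      hsplit, Measure.add_apply, Measure.map_apply T.measurable_ground hA,
      Measure.map_apply hF hA, Measure.restrict_apply (hF hA)]
    refine add_le_add (((h.arrival 1).le_smul _).trans ?_) (h.le_smul _)
    rw [Measure.smul_apply, smul_eq_mul, T.arrival_univ]
    gcongr
    exact Set.subset_univ _

theorem push {μ : Measure T.Tower} (h : T.IsTame μ) (n : ℕ) : T.IsTame (T.push n μ) := by
  induction n with
  | zero => rwa [T.push_zero]
  | succ n ih =>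
    rw [add_comm, ← T.push_push]
    exact ih.push_one

end IsTame

theorem TowerRegular.isTame_returned {μ : Measure T.Tower} (hac : μ ≪ T.towerMeasure)
    (h : T.TowerRegular T.looseConst 1 μ) (n : ℕ) : T.IsTame (T.returned n μ) :=
  .sum fun t => ((h.arrival hac t).isTame).push _

variable (T) in
/-- The measure of the set of points of the tower which do not enter the base by time `h`. -/
def tail (h : ℕ) : ℝ≥0∞ := T.towerMeasure {p | h < T.returnTime p}

theorem IsTame.unreturned_le {w : Measure T.Tower} (hw : T.IsTame w) (n : ℕ) :
    w {p | n < T.returnTime p} ≤ T.densityBound * w Set.univ * T.tail n := hw.le_smul _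

variable (T) in
/-- The measure `μ` becomes tame after `n` steps, up to a remainder of mass at most `ε`. -/
def TameAfter (n : ℕ) (ε : ℝ≥0∞) (μ : Measure T.Tower) : Prop :=
  ∃ α r, T.push n μ = α + r ∧ T.IsTame α ∧ r Set.univ ≤ ε

theorem IsTame.tameAfter_of_arrival {μ w : Measure T.Tower} (hw : T.IsTame w) (hle : μ ≤ w)
    (n h : ℕ) (c : ℝ≥0∞)
    (harrival : ∀ t, T.TameAfter n (c * T.arrival t w Set.univ) ((T.arrival t μ).map T.ground)) :
    T.TameAfter (n + h) (c * w Set.univ + T.densityBound * w Set.univ * T.tail h) μ := by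
  choose α r hαr hα hr using harrival
  refine ⟨Measure.sum fun t : Set.Iic h => T.push (h - t) (α t),
    (Measure.sum fun t : Set.Iic h => T.push (h - t) (r t)) +
      T.push n (T.push h (μ.restrict {p | h < T.returnTime p})), ?_,
    .sum fun t => (hα t).push _, ?_⟩
  · rw [← add_assoc, Measure.sum_add_sum, ← T.push_push, T.push_eq_returned_add h, T.push_add,
      returned, T.push_sum]
    simp_rw [T.push_comm n, hαr, T.push_add]
  · rw [Measure.add_apply, T.push_univ, T.push_univ, Measure.restrict_apply_univ,
      Measure.sum_apply _ .univ]
    refine add_le_add ?_ ((hle _).trans (hw.unreturned_le h))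
    simp_rw [T.push_univ]
    calc ∑' t : Set.Iic h, r t Set.univ ≤ ∑' t, r t Set.univ :=
          ENNReal.tsum_comp_le_tsum_of_injective Subtype.val_injective _
      _ ≤ ∑' t, c * T.arrival t w Set.univ := ENNReal.tsum_le_tsum hr
      _ = c * w Set.univ := by rw [ENNReal.tsum_mul_left, T.tsum_arrival_univ]

/-- Every return gains one symbol of regularity, so that regularity at the scale of cylinders of
length `j + 1` turns into tameness after `j + 1` returns. -/
theorem TowerRegular.tameAfter {j : ℕ} {μ w : Measure T.Tower}
    (hμ : T.TowerRegular T.tightConst (j + 1) μ) (hw : T.IsTame w) (hle : μ ≤ w) (h : ℕ) :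
    T.TameAfter ((j + 1) * h) ((j + 1 : ℕ) * (T.densityBound * T.tail h) * w Set.univ) μ := by
  induction j generalizing μ w with
  | zero =>
    have harrival t := hμ.loosen.arrival (hw.absolutelyContinuous_of_le hle) t
    have htame := hw.tameAfter_of_arrival hle 0 h 0 fun t =>
      ⟨(T.arrival t μ).map T.ground, 0, by rw [T.push_zero, add_zero], (harrival t).isTame,
        by simp⟩
    convert htame using 1
    · ring
    · rw [zero_mul, zero_add, zero_add, Nat.cast_one, one_mul, mul_right_comm]
  | succ j ih =>
    have harrival t := hμ.loosen.arrival (hw.absolutelyContinuous_of_le hle) t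
    have htame := hw.tameAfter_of_arrival hle ((j + 1) * h) h
      ((j + 1 : ℕ) * (T.densityBound * T.tail h)) fun t => by
        rw [← T.map_ground_univ]
        exact ih (harrival t).map_ground (hw.arrival t).isTame
          (Measure.map_mono (T.arrival_mono t hle) T.measurable_ground)
    convert htame using 1
    · ring
    · push_cast
      ring

end YoungTower

/-! ### Coupling -/

namespace YoungTower

variable {Δ₀ : Type*} [MeasurableSpace Δ₀] (T : YoungTower Δ₀)

/-- The reference measure of the base, as a measure on the tower. -/
def groundMeasure : Measure T.Tower := T.m₀.map T.ground

instance : IsFiniteMeasure T.groundMeasure := Measure.isFiniteMeasure_map _ _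

theorem groundMeasure_univ : T.groundMeasure Set.univ = T.m₀ Set.univ := T.map_ground_univ _

theorem isTame_groundMeasure : T.IsTame T.groundMeasure :=
  BaseRegular.isTame (.self (T.one_le_distortionFactor T.tightConst_nonneg))

theorem isTame_towerMeasure : T.IsTame T.towerMeasure := by
  refine ⟨.self (T.one_le_distortionFactor T.tightConst_nonneg), ?_⟩
  refine (one_smul ℝ≥0∞ T.towerMeasure).ge.trans (smul_le_smul_measure ?_ _)
  calc 1 ≤ T.densityBound * T.groundMeasure Set.univ := by
        rw [groundMeasure_univ]
        exact T.one_le_densityBound_mul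
    _ ≤ T.densityBound * T.towerMeasure Set.univ := mul_le_mul_right (T.map_ground_le _) _

/-- The proportion of the reference measure of the base which tame measures contain at a return. -/
def lowerConst : ℝ≥0∞ := (T.distortionFactor T.tightConst 0 * T.m₀ Set.univ)⁻¹

theorem lowerConst_ne_zero : T.lowerConst ≠ 0 :=
  ENNReal.inv_ne_zero.2 (ENNReal.mul_ne_top (T.distortionFactor_ne_top _ _) (measure_ne_top _ _))

variable {T} in
theorem BaseRegular.smul_groundMeasure_le {μ : Measure Δ₀} (h : T.BaseRegular T.tightConst 0 μ) :
    (T.lowerConst * μ Set.univ) • T.groundMeasure ≤ μ.map T.ground := by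
  rw [groundMeasure, ← Measure.map_smul]
  exact Measure.map_mono (HasDistortion.smul_le h le_rfl T.sameBaseCylinder_zero)
    T.measurable_ground

/-- The times at which the push-forward of the reference measure of the base dominates a multiple
of that measure. -/
def renewalTimes : AddSubmonoid ℕ where
  carrier := {n | ∃ c : ℝ≥0∞, c ≠ 0 ∧ c • T.groundMeasure ≤ T.push n T.groundMeasure}
  zero_mem' := ⟨1, one_ne_zero, by rw [one_smul, T.push_zero]⟩
  add_mem' := by
    rintro a b ⟨c, hc, ha⟩ ⟨c', hc', hb⟩
    refine ⟨c' * c, mul_ne_zero hc' hc, ?_⟩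
    calc (c' * c) • T.groundMeasure = c' • c • T.groundMeasure := mul_smul _ _ _
      _ ≤ c' • T.push a T.groundMeasure := Measure.le_iff.2 fun A _ => mul_le_mul_right (ha A) _
      _ ≤ T.push a (T.push b T.groundMeasure) := by
        rw [← T.push_smul]
        exact T.push_mono a hb
      _ = T.push (a + b) T.groundMeasure := T.push_push _ _ _

theorem Ret_mem_renewalTimes {i : ℕ} (hi : i ∈ T.I) : T.Ret i ∈ T.renewalTimes := by
  refine ⟨_, mul_ne_zero T.lowerConst_ne_zero ?_,
    (T.isTame_groundMeasure.arrival (T.Ret i)).smul_groundMeasure_le.trans ?_⟩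
  · rw [T.arrival_univ, groundMeasure,
      Measure.map_apply T.measurable_ground (T.measurableSet_returnTime_eq _)]
    exact ((T.Λ_pos i hi).trans_le (measure_mono (T.R_eq i hi))).ne'
  · rw [← T.push_restrict_returnTime]
    exact T.push_mono _ Measure.restrict_le_self

theorem exists_forall_mem_renewalTimes : ∃ N, ∀ n ≥ N, n ∈ T.renewalTimes := by
  obtain ⟨N, hN⟩ := Nat.exists_mem_closure_of_ge (T.Ret '' T.I)
  have hgcd : Nat.setGcd (T.Ret '' T.I) = 1 :=
    T.Ret_gcd _ fun i hi => Nat.setGcd_dvd_of_mem (Set.mem_image_of_mem _ hi)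
  have hle : AddSubmonoid.closure (T.Ret '' T.I) ≤ T.renewalTimes := by
    rw [AddSubmonoid.closure_le]
    rintro _ ⟨i, hi, rfl⟩
    exact T.Ret_mem_renewalTimes hi
  exact ⟨N, fun n hn => hle (hN n hn (hgcd ▸ one_dvd n))⟩

theorem exists_smul_groundMeasure_le_push (L : ℕ) : ∃ N, ∃ c : ℝ≥0∞, c ≠ 0 ∧
    ∀ n ∈ Finset.Icc N (N + L), c • T.groundMeasure ≤ T.push n T.groundMeasure := by
  obtain ⟨N, hN⟩ := T.exists_forall_mem_renewalTimes
  choose! c hc hle using hN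
  refine ⟨N, (Finset.Icc N (N + L)).inf c, ?_, fun n hn => ?_⟩
  · rw [← pos_iff_ne_zero, Finset.lt_inf_iff (by simp)]
    exact fun n hn => pos_iff_ne_zero.2 (hc n (Finset.mem_Icc.1 hn).1)
  · exact (smul_le_smul_measure (Finset.inf_le hn) _).trans (hle n (Finset.mem_Icc.1 hn).1)

variable {T}

theorem IsTame.half_le_returned {μ : Measure T.Tower} [IsFiniteMeasure μ] (hμ : T.IsTame μ)
    {t : ℕ} (ht : T.densityBound * T.tail t ≤ 2⁻¹) :
    2⁻¹ * μ Set.univ ≤ T.returned t μ Set.univ := by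
  have hunreturned : μ {p | t < T.returnTime p} ≤ 2⁻¹ * μ Set.univ := calc
    μ {p | t < T.returnTime p} ≤ T.densityBound * T.tail t * μ Set.univ :=
      (hμ.unreturned_le t).trans_eq (by ring)
    _ ≤ _ := by gcongr
  have hfin : 2⁻¹ * μ Set.univ ≠ ∞ := ENNReal.mul_ne_top (by simp) (measure_ne_top _ _)
  refine (ENNReal.add_le_add_iff_right hfin).1 ?_
  calc 2⁻¹ * μ Set.univ + 2⁻¹ * μ Set.univ = T.push t μ Set.univ := by
        rw [← add_mul, ENNReal.inv_two_add_inv_two, one_mul, T.push_univ]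
    _ = T.returned t μ Set.univ + μ {p | t < T.returnTime p} := by
        rw [T.push_eq_returned_add, Measure.add_apply, T.push_univ, Measure.restrict_apply_univ]
    _ ≤ _ := by gcongr

theorem BaseRegular.smul_groundMeasure_le_push {μ : Measure Δ₀}
    (h : T.BaseRegular T.tightConst 0 μ) {n : ℕ} {c : ℝ≥0∞}
    (hc : c • T.groundMeasure ≤ T.push n T.groundMeasure) :
    (T.lowerConst * c * μ Set.univ) • T.groundMeasure ≤ T.push n (μ.map T.ground) := by
  calc (T.lowerConst * c * μ Set.univ) • T.groundMeasure
      = (T.lowerConst * μ Set.univ) • c • T.groundMeasure := by rw [smul_smul, mul_right_comm]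
    _ ≤ (T.lowerConst * μ Set.univ) • T.push n T.groundMeasure :=
        Measure.le_iff.2 fun A _ => mul_le_mul_right (hc A) _
    _ ≤ _ := by
        rw [← T.push_smul]
        exact T.push_mono n h.smul_groundMeasure_le

theorem IsTame.smul_groundMeasure_le_push_returned {μ : Measure T.Tower} (hμ : T.IsTame μ)
    {N t : ℕ} {c : ℝ≥0∞}
    (hc : ∀ n ∈ Finset.Icc N (N + t), c • T.groundMeasure ≤ T.push n T.groundMeasure) :
    (T.lowerConst * c * T.returned t μ Set.univ) • T.groundMeasure ≤
      T.push N (T.returned t μ) := by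
  rw [returned, T.push_sum]
  refine smul_sum_univ_le_sum fun s => ?_
  rw [T.push_push, T.push_univ, map_ground_univ]
  exact (hμ.arrival s).smul_groundMeasure_le_push (hc _ (by simp))

variable (T) in
theorem exists_smul_groundMeasure_le_push_of_isTame
    (htail : Filter.Tendsto T.tail Filter.atTop (nhds 0)) :
    ∃ N, ∃ δ : ℝ≥0∞, δ ≠ 0 ∧ ∀ (μ : Measure T.Tower) [IsFiniteMeasure μ], T.IsTame μ →
      (δ * μ Set.univ) • T.groundMeasure ≤ T.push N μ := by
  have hlim : Filter.Tendsto (fun t => T.densityBound * T.tail t) Filter.atTop (nhds 0) := by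
    simpa using ENNReal.Tendsto.const_mul htail (Or.inr T.densityBound_ne_top)
  obtain ⟨t, ht⟩ := (hlim.eventually_le_const (by simp : (0 : ℝ≥0∞) < 2⁻¹)).exists
  obtain ⟨N, c, hc, hle⟩ := T.exists_smul_groundMeasure_le_push t
  refine ⟨N + t, T.lowerConst * c * 2⁻¹,
    mul_ne_zero (mul_ne_zero T.lowerConst_ne_zero hc) (by simp), fun μ _ hμ => ?_⟩
  calc (T.lowerConst * c * 2⁻¹ * μ Set.univ) • T.groundMeasure
      ≤ (T.lowerConst * c * T.returned t μ Set.univ) • T.groundMeasure := by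
        refine smul_le_smul_measure ?_ _
        rw [mul_assoc _ 2⁻¹]
        gcongr
        exact hμ.half_le_returned ht
    _ ≤ T.push N (T.returned t μ) := hμ.smul_groundMeasure_le_push_returned hle
    _ ≤ T.push N (T.push t μ) := T.push_mono N
        (by rw [T.push_eq_returned_add]; exact Measure.le_add_right le_rfl)
    _ = T.push (N + t) μ := T.push_push _ _ _

variable (T) in
/-- The proportion of the coupled mass which is kept back in order to preserve regularity. -/
def keptRatio : ℝ := (1 + T.β) / 2

theorem keptRatio_nonneg : 0 ≤ T.keptRatio := by
  unfold keptRatio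
  linarith [T.β_pos]

theorem keptRatio_lt_one : T.keptRatio < 1 := by
  unfold keptRatio
  linarith [T.β_lt_one]

theorem ofReal_keptRatio_add :
    ENNReal.ofReal T.keptRatio + ENNReal.ofReal (1 - T.keptRatio) = 1 := by
  rw [← ENNReal.ofReal_add keptRatio_nonneg (sub_pos.2 keptRatio_lt_one).le, add_sub_cancel,
    ENNReal.ofReal_one]

theorem distortionFactor_tightConst_le (k : ℕ) : T.distortionFactor T.tightConst k ≤
    ENNReal.ofReal T.keptRatio * T.distortionFactor T.looseConst k +
      ENNReal.ofReal (1 - T.keptRatio) := by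
  have hs := T.keptRatio_nonneg
  have hs' := T.keptRatio_lt_one
  unfold distortionFactor
  rw [← ENNReal.ofReal_mul hs, ← ENNReal.ofReal_add (mul_nonneg hs (Real.exp_pos _).le)
    (sub_pos.2 hs').le, tightConst_eq, mul_assoc]
  exact ENNReal.ofReal_le_ofReal (exp_mul_le hs hs'.le _)

theorem groundMeasure_eq_towerMeasure {A : Set T.Tower} (hA : MeasurableSet A)
    (hl : ∀ p ∈ A, p.1.2 = 0) : T.groundMeasure A = T.towerMeasure A := by
  rw [T.towerMeasure_of_level_eq hA hl, slice_zero, groundMeasure,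
    Measure.map_apply T.measurable_ground hA]

theorem groundMeasure_eq_zero {l : ℕ} (h0 : l ≠ 0) {A : Set T.Tower} (hA : MeasurableSet A)
    (hl : ∀ p ∈ A, p.1.2 = l) : T.groundMeasure A = 0 := by
  have hempty : T.ground ⁻¹' A = ∅ :=
    Set.eq_empty_of_forall_notMem fun x hx => h0 (hl _ hx).symm
  rw [groundMeasure, Measure.map_apply T.measurable_ground hA, hempty, measure_empty]

/-- By convexity of `exp`, the slack between the two regularity constants makes up for the
removal of a part of the coupled mass. -/
theorem TowerRegular.add_keptRatio_smul_groundMeasure {ρ : Measure T.Tower} {a : ℝ≥0∞} (ha : a ≠ ∞)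
    (h : T.TowerRegular T.tightConst 1 (ρ + a • T.groundMeasure)) :
    T.TowerRegular T.looseConst 1
      (ρ + (ENNReal.ofReal T.keptRatio * a) • T.groundMeasure) := by
  refine .of_level fun k hk A A' hA hA' hr l hl hl' => ?_
  have hreg := h k hk A A' hA hA' hr
  simp only [Measure.add_apply, Measure.smul_apply, smul_eq_mul] at hreg ⊢
  by_cases h0 : l = 0
  · subst h0
    rw [← groundMeasure_eq_towerMeasure hA hl, ← groundMeasure_eq_towerMeasure hA' hl'] at hreg ⊢
    exact add_mul_le_mul_add_mul ofReal_keptRatio_add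
      (T.one_le_distortionFactor T.looseConst_pos.le k) (distortionFactor_tightConst_le k)
      (ENNReal.mul_ne_top ENNReal.ofReal_ne_top (ENNReal.mul_ne_top
        (ENNReal.mul_ne_top ha (measure_ne_top _ _)) (measure_ne_top _ _))) hreg
  · simp only [groundMeasure_eq_zero h0 hA hl, groundMeasure_eq_zero h0 hA' hl', mul_zero,
      add_zero] at hreg ⊢
    exact hreg.trans (mul_le_mul_left (T.distortionFactor_mono T.tightConst_le_looseConst k) _)

theorem IsTame.exists_coupling {μ : Measure T.Tower} [IsFiniteMeasure μ] (hμ : T.IsTame μ)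
    {a : ℝ≥0∞} (ha : a ≠ ∞) (hle : a • T.groundMeasure ≤ μ) (h : ℕ) :
    ∃ α r, T.push h μ =
        (ENNReal.ofReal (1 - T.keptRatio) * a) • T.push h T.groundMeasure + α + r ∧
      T.IsTame α ∧ r Set.univ ≤ T.densityBound * μ Set.univ * T.tail h := by
  have : IsFiniteMeasure (a • T.groundMeasure) := isFiniteMeasure_of_le μ hle
  have hsub : μ - a • T.groundMeasure + a • T.groundMeasure = μ :=
    Measure.sub_add_cancel_of_le hle
  set κ := μ - a • T.groundMeasure + (ENNReal.ofReal T.keptRatio * a) • T.groundMeasure with hκ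
  have hμκ : μ = (ENNReal.ofReal (1 - T.keptRatio) * a) • T.groundMeasure + κ := by
    rw [hκ, add_comm, add_assoc, ← add_smul, ← add_mul, ofReal_keptRatio_add, one_mul, hsub]
  have hκle : κ ≤ μ := hμκ.ge.trans' (Measure.le_add_left le_rfl)
  have hreg : T.TowerRegular T.looseConst 1 κ :=
    .add_keptRatio_smul_groundMeasure ha (hsub.symm ▸ hμ.regular)
  refine ⟨T.returned h κ, T.push h (κ.restrict {p | h < T.returnTime p}), ?_,
    hreg.isTame_returned (hμ.absolutelyContinuous_of_le hκle) h, ?_⟩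
  · rw [add_assoc, ← T.push_eq_returned_add, ← T.push_smul, ← T.push_add, ← hμκ]
  · rw [T.push_univ, Measure.restrict_apply_univ]
    exact (hκle _).trans (hμ.unreturned_le h)

variable (T) in
/-- Within time `N`, tame measures can be coupled with the reference measure of the base for a
proportion `e` of their mass, and what remains is again tame after a further time `h`, up to a
remainder which is controlled by the tail of the return time. -/
def CouplesWithin (N : ℕ) (e : ℝ≥0∞) : Prop :=
  ∀ (μ : Measure T.Tower) [IsFiniteMeasure μ], T.IsTame μ → ∀ h, ∃ α r,
    T.push (N + h) μ = (e * μ Set.univ) • T.push h T.groundMeasure + α + r ∧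
    T.IsTame α ∧ r Set.univ ≤ T.densityBound * μ Set.univ * T.tail h

variable (T) in
theorem exists_couplesWithin (htail : Filter.Tendsto T.tail Filter.atTop (nhds 0)) :
    ∃ N, ∃ ε : ℝ, 0 < ε ∧ T.CouplesWithin N (ENNReal.ofReal ε) := by
  obtain ⟨N, δ, hδ, hle⟩ := T.exists_smul_groundMeasure_le_push_of_isTame htail
  obtain ⟨d, -, hdδ⟩ := ENNReal.lt_iff_exists_real_btwn.1 (pos_iff_ne_zero.2 hδ)
  have hkept := sub_pos.2 T.keptRatio_lt_one
  refine ⟨N, (1 - T.keptRatio) * d,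
    mul_pos hkept (ENNReal.ofReal_pos.1 hdδ.1), fun μ _ hμ h => ?_⟩
  obtain ⟨α, r, hαr, hα, hr⟩ := (hμ.push N).exists_coupling
    (ENNReal.mul_ne_top ENNReal.ofReal_ne_top (measure_ne_top μ Set.univ))
    ((smul_le_smul_measure (mul_le_mul_left hdδ.2.le _) _).trans (hle μ hμ)) h
  refine ⟨α, r, ?_, hα, T.push_univ N μ ▸ hr⟩
  rw [add_comm N h, ← T.push_push, hαr, ENNReal.ofReal_mul hkept.le, mul_assoc]

end YoungTower

/-! ### Polynomial loss of memory -/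

namespace YoungTower

variable {Δ₀ : Type*} [MeasurableSpace Δ₀] (T : YoungTower Δ₀)

/-- At time `n`, tame measures of equal mass are close up to a proportion `a` of their mass. -/
def CloseAt (n : ℕ) (a : ℝ≥0∞) : Prop :=
  ∀ (μ ν : Measure T.Tower) [IsFiniteMeasure μ] [IsFiniteMeasure ν], T.IsTame μ → T.IsTame ν →
    ν Set.univ = μ Set.univ → Close (μ Set.univ * a) (T.push n μ) (T.push n ν)

variable {T}

theorem closeAt_one (n : ℕ) : T.CloseAt n 1 := fun μ ν _ _ _ _ hmass =>
  .of_univ_le (by rw [T.push_univ, mul_one]) (by rw [T.push_univ, hmass, mul_one])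

theorem CloseAt.mono {n : ℕ} {a a' : ℝ≥0∞} (h : T.CloseAt n a) (ha : a ≤ a') : T.CloseAt n a' :=
  fun μ ν _ _ hμ hν hmass => (h μ ν hμ hν hmass).mono (mul_le_mul_right ha _)

theorem CloseAt.close_push_add {n : ℕ} {a M ε : ℝ≥0∞} (h : T.CloseAt n a)
    {α α' r r' : Measure T.Tower} [IsFiniteMeasure α] [IsFiniteMeasure α'] (hα : T.IsTame α)
    (hα' : T.IsTame α') (hmass : α Set.univ + r Set.univ = α' Set.univ + r' Set.univ)
    (hM : α Set.univ ≤ M) (hM' : α' Set.univ ≤ M) (hr : r Set.univ ≤ ε) (hr' : r' Set.univ ≤ ε) :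
    Close (M * a + ε) (T.push n (α + r)) (T.push n (α' + r')) := by
  wlog hle : α Set.univ ≤ α' Set.univ generalizing α α' r r'
  · exact (this hα' hα hmass.symm hM' hM hr' hr (le_of_not_ge hle)).symm
  obtain ⟨c, hc, hcα⟩ := exists_le_one_mul_eq hle (measure_ne_top _ _)
  have hsplit : c • α' + (1 - c) • α' = α' := by
    rw [← add_smul, add_tsub_cancel_of_le hc, one_smul]
  have hcα' : (c • α') Set.univ = α Set.univ := hcα
  have : IsFiniteMeasure (c • α') := ⟨by rw [hcα']; exact measure_lt_top _ _⟩
  have hrest : ((1 - c) • α' + r') Set.univ = r Set.univ := by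
    refine (ENNReal.add_right_inj (measure_ne_top α Set.univ)).1 ?_
    rw [hmass, ← hcα', ← Measure.add_apply, ← add_assoc, hsplit, Measure.add_apply]
  rw [← hsplit, add_assoc, T.push_add, T.push_add]
  refine ((h α (c • α') hα (hα'.smul c) hcα').mono (mul_le_mul_left hM a)).add
    (.of_univ_le ?_ ?_)
  · rwa [T.push_univ]
  · rwa [T.push_univ, hrest]

variable (T) in
theorem coupled_mass_add {k h : ℕ} {x w : ℝ≥0∞} {μ α r : Measure T.Tower} (hμ : μ Set.univ = w)
    (hpush : T.push k μ = x • T.push h T.groundMeasure + α + r) :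
    x * T.m₀ Set.univ + (α Set.univ + r Set.univ) = w := by
  rw [← hμ, ← T.push_univ k μ, hpush]
  simp only [Measure.add_apply, Measure.smul_apply, smul_eq_mul, T.push_univ,
    T.groundMeasure_univ, add_assoc]

theorem CloseAt.step {N n : ℕ} {a e : ℝ≥0∞} (he : e ≠ ∞) (hcouple : T.CouplesWithin N e)
    (hclose : T.CloseAt n a) (h : ℕ) :
    T.CloseAt (n + (N + h))
      ((1 - e * T.m₀ Set.univ) * a + T.densityBound * T.tail h) := by
  intro μ ν _ _ hμ hν hmass
  obtain ⟨α, r, hαr, hα, hr⟩ := hcouple μ hμ h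
  obtain ⟨α', r', hαr', hα', hr'⟩ := hcouple ν hν h
  rw [hmass] at hαr' hr'
  set w := μ Set.univ
  have hw : w ≠ ∞ := measure_ne_top _ _
  have hcoupled : e * w * T.m₀ Set.univ ≠ ∞ :=
    ENNReal.mul_ne_top (ENNReal.mul_ne_top he hw) (measure_ne_top _ _)
  have le_rest : ∀ {x y : ℝ≥0∞}, e * w * T.m₀ Set.univ + (x + y) = w →
      x ≤ (1 - e * T.m₀ Set.univ) * w := by
    intro x y hxy
    rw [ENNReal.sub_mul fun _ _ => hw, one_mul, mul_right_comm]
    exact ENNReal.le_sub_of_add_le_left hcoupled ((add_le_add_right le_self_add _).trans hxy.le)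
  have hm := T.coupled_mass_add rfl hαr
  have hm' := T.coupled_mass_add hmass hαr'
  have hrest_ne_top : (1 - e * T.m₀ Set.univ) * w ≠ ∞ :=
    ENNReal.mul_ne_top (ne_top_of_le_ne_top ENNReal.one_ne_top tsub_le_self) hw
  have : IsFiniteMeasure α := ⟨(le_rest hm).trans_lt hrest_ne_top.lt_top⟩
  have : IsFiniteMeasure α' := ⟨(le_rest hm').trans_lt hrest_ne_top.lt_top⟩
  have hclose_rest := hclose.close_push_add hα hα'
    ((ENNReal.add_right_inj hcoupled).1 (hm.trans hm'.symm)) (le_rest hm) (le_rest hm') hr hr'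
  rw [← T.push_push n (N + h) μ, ← T.push_push n (N + h) ν, hαr, hαr', add_assoc, add_assoc,
    T.push_add n _ (α + r), T.push_add n _ (α' + r')]
  refine (hclose_rest.add_left _).mono (le_of_eq ?_)
  ring

variable (T) in
/-- A polynomial bound for the tail of the return time on the tower. -/
def HasPolynomialTail (γ C : ℝ) : Prop :=
  ∀ h : ℕ, 1 ≤ h → T.tail h ≤ ENNReal.ofReal (C * (h : ℝ) ^ (-γ))

variable {γ C : ℝ}

theorem HasPolynomialTail.tendsto (htail : T.HasPolynomialTail γ C) (hγ : 0 < γ) :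
    Filter.Tendsto T.tail Filter.atTop (nhds 0) := by
  have hlim : Filter.Tendsto (fun h : ℕ => ENNReal.ofReal (C * (h : ℝ) ^ (-γ))) Filter.atTop
      (nhds 0) := by
    rw [← ENNReal.ofReal_zero]
    exact ENNReal.tendsto_ofReal (tendsto_const_mul_natCast_rpow_neg C hγ)
  refine tendsto_of_tendsto_of_tendsto_of_le_of_le' tendsto_const_nhds hlim
    (.of_forall fun _ => zero_le) ?_
  filter_upwards [Filter.eventually_ge_atTop 1] with h hh using htail h hh

theorem HasPolynomialTail.exists_closeAt (htail : T.HasPolynomialTail γ C) (hγ : 0 < γ)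
    (hC : 0 ≤ C) :
    ∃ A : ℝ, 0 ≤ A ∧ ∀ n : ℕ, 1 ≤ n → T.CloseAt n (ENNReal.ofReal (A * (n : ℝ) ^ (-γ))) := by
  obtain ⟨N, ε, hε, hcouple⟩ := T.exists_couplesWithin (htail.tendsto hγ)
  have hm₀ : 0 < T.m₀.real Set.univ :=
    ENNReal.toReal_pos T.m₀_univ_ne_zero (measure_ne_top _ _)
  have hq' : max (1 - ε * T.m₀.real Set.univ) 0 < 1 := max_lt (by nlinarith) one_pos
  set q := max (1 - ε * T.m₀.real Set.univ) 0
  have hq : 0 ≤ q := le_max_right _ _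
  have hrest : 1 - ENNReal.ofReal ε * T.m₀ Set.univ ≤ ENNReal.ofReal q := by
    rw [← ofReal_measureReal, ← ENNReal.ofReal_mul hε.le, ← ENNReal.ofReal_one,
      ← ENNReal.ofReal_sub _ (mul_pos hε hm₀).le]
    exact ENNReal.ofReal_le_ofReal (le_max_left _ _)
  have hb : 0 ≤ T.densityBound.toReal * C := mul_nonneg ENNReal.toReal_nonneg hC
  refine exists_polynomial_rate (P := fun n a => T.CloseAt n (ENNReal.ofReal a)) hq hq' hb hγ.le
    (fun n a a' ha h => h.mono (ENNReal.ofReal_le_ofReal ha))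
    (fun n => by rw [ENNReal.ofReal_one]; exact closeAt_one n)
    fun n h a hh ha hclose => (hclose.step ENNReal.ofReal_ne_top hcouple h).mono ?_
  calc (1 - ENNReal.ofReal ε * T.m₀ Set.univ) * ENNReal.ofReal a + T.densityBound * T.tail h
      ≤ ENNReal.ofReal q * ENNReal.ofReal a +
          ENNReal.ofReal T.densityBound.toReal * ENNReal.ofReal (C * (h : ℝ) ^ (-γ)) := by
        rw [ENNReal.ofReal_toReal T.densityBound_ne_top]
        gcongr
        exact htail h hh
    _ = ENNReal.ofReal (q * a + T.densityBound.toReal * C * (h : ℝ) ^ (-γ)) := by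
        rw [← ENNReal.ofReal_mul hq, ← ENNReal.ofReal_mul ENNReal.toReal_nonneg,
          ← ENNReal.ofReal_add (by positivity) (by positivity), mul_assoc]

end YoungTower

/-! ### The tail of the tower -/

namespace YoungTower

variable {Δ₀ : Type*} [MeasurableSpace Δ₀] (T : YoungTower Δ₀)

theorem tail_eq_tsum (h : ℕ) : T.tail h = ∑' l, T.m₀ {x | l + h < T.R x} := by
  rw [tail, T.towerMeasure_apply (T.measurableSet_lt_returnTime h)]
  refine tsum_congr fun l => congrArg T.m₀ (Set.ext fun x => ?_)
  have hiff : (l < T.R x ∧ h < T.R x - l) ↔ l + h < T.R x := by lia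
  exact ⟨fun ⟨hl, hx⟩ => hiff.1 ⟨hl, hx⟩, fun hx => ⟨(hiff.2 hx).1, (hiff.2 hx).2⟩⟩

theorem hasPolynomialTail {ζ C : ℝ} (hζ : 1 < ζ) (hC : 0 ≤ C)
    (htail : ∀ n : ℕ, 1 ≤ n → (T.m₀ {x | n < T.R x}).toReal ≤ C / (n : ℝ) ^ ζ) :
    T.HasPolynomialTail (ζ - 1) (C * (2 ^ ζ / (ζ - 1))) := by
  intro h hh
  rw [tail_eq_tsum]
  refine ENNReal.tsum_le_of_sum_range_le fun L => ?_
  have hsum := sum_rpow_neg_succ_le (sub_pos.2 hζ) hh L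
  rw [sub_add_cancel] at hsum
  calc ∑ l ∈ Finset.range L, T.m₀ {x | l + h < T.R x}
      ≤ ∑ l ∈ Finset.range L, ENNReal.ofReal (C * ((l + h : ℕ) : ℝ) ^ (-ζ)) := by
        refine Finset.sum_le_sum fun l _ => ?_
        rw [← ENNReal.ofReal_toReal (measure_ne_top T.m₀ _)]
        refine ENNReal.ofReal_le_ofReal ((htail (l + h) (by lia)).trans_eq ?_)
        rw [Real.rpow_neg (Nat.cast_nonneg _), div_eq_mul_inv]
    _ = ENNReal.ofReal (C * ∑ l ∈ Finset.range L, ((l + h : ℕ) : ℝ) ^ (-ζ)) := by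
        rw [Finset.mul_sum, ENNReal.ofReal_sum_of_nonneg fun l _ => by positivity]
    _ ≤ ENNReal.ofReal (C * (2 ^ ζ / (ζ - 1)) * (h : ℝ) ^ (-(ζ - 1))) := by
        rw [mul_assoc]
        gcongr

theorem HasPolynomialTail.isFiniteMeasure_towerMeasure {T : YoungTower Δ₀} {γ C : ℝ}
    (htail : T.HasPolynomialTail γ C) : IsFiniteMeasure T.towerMeasure := by
  have huniv : T.towerMeasure Set.univ = T.tail 0 :=
    congrArg T.towerMeasure (Set.eq_univ_of_forall T.returnTime_pos).symm
  have hzero : T.tail 0 = T.m₀ {x | 0 < T.R x} + T.tail 1 := by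
    rw [tail_eq_tsum, tail_eq_tsum, tsum_eq_zero_add' ENNReal.summable]
  refine ⟨?_⟩
  rw [huniv, hzero]
  exact ENNReal.add_lt_top.2
    ⟨measure_lt_top _ _, (htail 1 le_rfl).trans_lt ENNReal.ofReal_lt_top⟩

/-! ### The equilibrium -/

/-- The normalized reference measure of the base, on the ground level of the tower. -/
def unitGroundMeasure : Measure T.Tower := (T.m₀ Set.univ)⁻¹ • T.groundMeasure

instance : IsProbabilityMeasure T.unitGroundMeasure := by
  refine ⟨?_⟩
  rw [unitGroundMeasure, Measure.smul_apply, smul_eq_mul, T.groundMeasure_univ,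
    ENNReal.inv_mul_cancel T.m₀_univ_ne_zero (measure_ne_top _ _)]

instance (n : ℕ) (μ : Measure T.Tower) [IsProbabilityMeasure μ] :
    IsProbabilityMeasure (T.push n μ) :=
  ⟨(T.push_univ n μ).trans measure_univ⟩

theorem isTame_unitGroundMeasure : T.IsTame T.unitGroundMeasure := T.isTame_groundMeasure.smul _

/-- `ν` attracts the push-forwards of tame measures at the rate `a`. -/
def Attracts (ν : Measure T.Tower) (a : ℕ → ℝ) : Prop :=
  ∀ (μ : Measure T.Tower) [IsFiniteMeasure μ], T.IsTame μ → ∀ n, 1 ≤ n → ∀ A, MeasurableSet A →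
    |(T.push n μ).real A - μ.real Set.univ * ν.real A| ≤ μ.real Set.univ * a n

variable {T}

theorem CloseAt.abs_measureReal_sub_le {n : ℕ} {a : ℝ} (h : T.CloseAt n (ENNReal.ofReal a))
    (ha : 0 ≤ a) {μ : Measure T.Tower} [IsFiniteMeasure μ] (hμ : T.IsTame μ) (k : ℕ)
    (A : Set T.Tower) :
    |(T.push n μ).real A - μ.real Set.univ * (T.push (n + k) T.unitGroundMeasure).real A| ≤
      μ.real Set.univ * a := by
  have hfin : μ Set.univ ≠ ∞ := measure_ne_top _ _
  have : IsFiniteMeasure (μ Set.univ • T.push k T.unitGroundMeasure) := Measure.smul_finite _ hfin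
  have hmass : (μ Set.univ • T.push k T.unitGroundMeasure) Set.univ = μ Set.univ := by
    rw [Measure.smul_apply, T.push_univ, measure_univ (μ := T.unitGroundMeasure), smul_eq_mul,
      mul_one]
  have hclose := h μ _ hμ ((T.isTame_unitGroundMeasure.push k).smul _) hmass
  rw [← ofReal_measureReal, ← ENNReal.ofReal_mul measureReal_nonneg, ofReal_measureReal] at hclose
  have := hclose.abs_measureReal_sub_le (by positivity) A
  rwa [T.push_smul, T.push_push, measureReal_ennreal_smul_apply] at this

variable {a : ℕ → ℝ}

theorem exists_tendstoSetwise_push [IsFiniteMeasure T.towerMeasure] (ha₀ : ∀ n, 0 ≤ a n)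
    (ha : Filter.Tendsto a Filter.atTop (nhds 0))
    (hclose : ∀ n, 1 ≤ n → T.CloseAt n (ENNReal.ofReal (a n))) :
    ∃ ν ≤ T.densityBound • T.towerMeasure,
      TendstoSetwise (fun n => T.push n T.unitGroundMeasure) ν := by
  have : IsFiniteMeasure (T.densityBound • T.towerMeasure) :=
    Measure.smul_finite _ T.densityBound_ne_top
  refine exists_tendstoSetwise (fun n => ?_) fun A _ => ?_
  · have := (T.isTame_unitGroundMeasure.push n).le_smul
    rwa [measure_univ, mul_one] at this
  · refine Metric.cauchySeq_iff'.2 fun ε hε => ?_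
    obtain ⟨N, hN, hN1⟩ := ((ha.eventually_lt_const hε).and (Filter.eventually_ge_atTop 1)).exists
    refine ⟨N, fun n hn => lt_of_le_of_lt ?_ hN⟩
    have hdiff :=
      (hclose N hN1).abs_measureReal_sub_le (ha₀ N) T.isTame_unitGroundMeasure (n - N) A
    rw [probReal_univ, one_mul, one_mul, Nat.add_sub_of_le hn] at hdiff
    rwa [dist_comm, Real.dist_eq]

theorem attracts_of_tendstoSetwise {ν : Measure T.Tower} (ha₀ : ∀ n, 0 ≤ a n)
    (hclose : ∀ n, 1 ≤ n → T.CloseAt n (ENNReal.ofReal (a n)))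
    (hν : TendstoSetwise (fun n => T.push n T.unitGroundMeasure) ν) : T.Attracts ν a := by
  intro μ _ hμ n hn A hA
  have hshift : Filter.Tendsto (fun k => (T.push (n + k) T.unitGroundMeasure).real A) Filter.atTop
      (nhds (ν.real A)) := by
    simp only [add_comm n]
    exact (Filter.tendsto_add_atTop_iff_nat n).2 (hν A hA)
  exact le_of_tendsto' (tendsto_const_nhds.sub (hshift.const_mul _)).abs fun k =>
    (hclose n hn).abs_measureReal_sub_le (ha₀ n) hμ k A

theorem measurePreserving_of_tendstoSetwise {μ ν : Measure T.Tower} [IsFiniteMeasure ν]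
    (hν : TendstoSetwise (fun n => T.push n μ) ν) : MeasurePreserving T.towerMap ν ν := by
  have hF := T.measurable_towerMap
  have hmap : ∀ n, (T.push n μ).map T.towerMap = T.push (n + 1) μ := fun n => by
    rw [add_comm, ← T.push_push]
    rfl
  have himage := hν.map hF
  simp only [hmap] at himage
  exact ⟨hF, himage.unique fun A hA => (Filter.tendsto_add_atTop_iff_nat 1).2 (hν A hA)⟩

theorem groundMeasure_absolutelyContinuous (htail : Filter.Tendsto T.tail Filter.atTop (nhds 0))
    {ν : Measure T.Tower} [IsFiniteMeasure ν]
    (hν : TendstoSetwise (fun n => T.push n T.unitGroundMeasure) ν) : T.groundMeasure ≪ ν := by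
  obtain ⟨N, δ, hδ, hlow⟩ := T.exists_smul_groundMeasure_le_push_of_isTame htail
  have hshift : TendstoSetwise (fun n => T.push (N + n) T.unitGroundMeasure) ν := fun A hA => by
    simp only [add_comm N]
    exact (Filter.tendsto_add_atTop_iff_nat N).2 (hν A hA)
  have hle : δ • T.groundMeasure ≤ ν := hshift.le_of_le fun n => by
    have := hlow _ (T.isTame_unitGroundMeasure.push n)
    rwa [T.push_push, measure_univ, mul_one] at this
  exact (Measure.absolutelyContinuous_smul hδ).trans (Measure.absolutelyContinuous_of_le hle)

theorem towerMeasure_absolutelyContinuous {ν : Measure T.Tower}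
    (hinv : MeasurePreserving T.towerMap ν ν) (hground : T.groundMeasure ≪ ν) :
    T.towerMeasure ≪ ν := by
  refine .mk fun A hA hνA => ?_
  rw [T.towerMeasure_apply hA, ENNReal.tsum_eq_zero]
  intro l
  have hnull : T.groundMeasure (T.towerMap^[l] ⁻¹' A) = 0 :=
    hground (((hinv.iterate l).measure_preimage hA.nullMeasurableSet).trans hνA)
  rw [groundMeasure, Measure.map_apply T.measurable_ground (T.measurable_iterate l hA)] at hnull
  refine measure_mono_null ?_ hnull
  rintro x ⟨hx, hxA⟩
  have hiterate : T.towerMap^[l] (T.ground x) = ⟨(x, l), hx⟩ :=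
    Subtype.ext ((T.coe_iterate_of_lt_returnTime hx).trans (by rw [ground, zero_add]))
  rwa [Set.mem_preimage, Set.mem_preimage, hiterate]

variable {γ C : ℝ}

theorem HasPolynomialTail.exists_equilibrium (htail : T.HasPolynomialTail γ C) (hγ : 0 < γ)
    (hC : 0 ≤ C) :
    ∃ ν : Measure T.Tower, IsProbabilityMeasure ν ∧ T.IsInvariantEquiv ν ∧
      ∃ K : ℝ, 0 ≤ K ∧ T.Attracts ν fun n => K * (n : ℝ) ^ (-γ) := by
  have := htail.isFiniteMeasure_towerMeasure
  obtain ⟨K, hK, hclose⟩ := htail.exists_closeAt hγ hC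
  have hrate₀ : ∀ n : ℕ, 0 ≤ K * (n : ℝ) ^ (-γ) := fun n => by positivity
  obtain ⟨ν, hle, hν⟩ := exists_tendstoSetwise_push hrate₀
    (tendsto_const_mul_natCast_rpow_neg K hγ) hclose
  have : IsFiniteMeasure (T.densityBound • T.towerMeasure) :=
    Measure.smul_finite _ T.densityBound_ne_top
  have : IsFiniteMeasure ν := isFiniteMeasure_of_le _ hle
  have hinv := measurePreserving_of_tendstoSetwise hν
  exact ⟨ν, hν.isProbabilityMeasure, ⟨hinv, Measure.absolutelyContinuous_of_le_smul hle,
    towerMeasure_absolutelyContinuous hinv (groundMeasure_absolutelyContinuous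
      (htail.tendsto hγ) hν)⟩, K, hK, attracts_of_tendstoSetwise hrate₀ hclose hν⟩

end YoungTower

/-! ### Itineraries -/

namespace YoungTower

variable {Δ₀ : Type*} [MeasurableSpace Δ₀] (T : YoungTower Δ₀)

open Classical in
/-- The index of the partition element containing a point of the base, shifted by one so that `0`
is left for the points outside all partition elements. -/
def symbol (x : Δ₀) : ℕ := if h : ∃ i, i ∈ T.I ∧ x ∈ T.Λ i then Nat.find h + 1 else 0

theorem symbol_eq_succ_iff {x : Δ₀} {i : ℕ} : T.symbol x = i + 1 ↔ i ∈ T.I ∧ x ∈ T.Λ i := by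
  classical
  unfold symbol
  split_ifs with h
  · obtain ⟨hfind, hx⟩ := Nat.find_spec h
    rw [Nat.add_right_cancel_iff]
    refine ⟨fun heq => heq ▸ ⟨hfind, hx⟩, fun hi => ?_⟩
    by_contra hne
    exact Set.disjoint_left.1 (T.Λ_disj hfind hi.1 hne) hx hi.2
  · exact ⟨fun h' => h'.elim, fun hi => absurd ⟨i, hi⟩ h⟩

theorem measurable_symbol : Measurable T.symbol := by
  have hsucc : ∀ i, MeasurableSet (T.symbol ⁻¹' {i + 1}) := fun i => by
    have hpre : T.symbol ⁻¹' {i + 1} = {x | i ∈ T.I ∧ x ∈ T.Λ i} :=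
      Set.ext fun x => T.symbol_eq_succ_iff
    by_cases hi : i ∈ T.I
    · simpa [hpre, hi] using T.Λ_meas i hi
    · simp [hpre, hi]
  refine measurable_to_countable' fun n => ?_
  cases n with
  | succ i => exact hsucc i
  | zero =>
    have hzero : T.symbol ⁻¹' {0} = (⋃ i, T.symbol ⁻¹' {i + 1})ᶜ := by
      ext x
      cases h : T.symbol x <;> simp [h]
    rw [hzero]
    exact (MeasurableSet.iUnion hsucc).compl

/-- The level of a point of the tower and the first `k` symbols of its itinerary. -/
def itinerary (k : ℕ) (p : T.Tower) : ℕ × (Fin k → ℕ) :=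
  (p.1.2, fun j => T.symbol (T.FR^[j] p.1.1))

theorem measurable_itinerary (k : ℕ) : Measurable (T.itinerary k) :=
  T.measurable_level.prodMk (measurable_pi_lambda _ fun j =>
    T.measurable_symbol.comp ((T.FR_meas.iterate j).comp T.measurable_basePoint))

theorem itinerary_eq_of_succ {k : ℕ} {p q : T.Tower}
    (h : T.itinerary (k + 1) p = T.itinerary (k + 1) q) : T.itinerary k p = T.itinerary k q :=
  Prod.ext (congrArg (fun c => c.1) h)
    (funext fun j => congrFun (congrArg (fun c => c.2) h) j.castSucc)

theorem SameCylinder.itinerary_eq {k : ℕ} {p q : T.Tower} (h : T.SameCylinder k p q) :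
    T.itinerary k p = T.itinerary k q := by
  refine Prod.ext h.1 (funext fun j => ?_)
  obtain ⟨i, hi, hp, hq⟩ := T.le_sepTime_iff.1 h.2 j j.2
  exact (T.symbol_eq_succ_iff.2 ⟨hi, hp⟩).trans (T.symbol_eq_succ_iff.2 ⟨hi, hq⟩).symm

theorem sameCylinder_of_itinerary_eq {k : ℕ} {p q : T.Tower}
    (hp : ∀ j, T.symbol (T.FR^[j] p.1.1) ≠ 0) (h : T.itinerary k p = T.itinerary k q) :
    T.SameCylinder k p q := by
  refine ⟨congrArg Prod.fst h, T.le_sepTime_iff.2 fun j hj => ?_⟩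
  have hsymbol : T.symbol (T.FR^[j] p.1.1) = T.symbol (T.FR^[j] q.1.1) :=
    congrFun (congrArg Prod.snd h) ⟨j, hj⟩
  obtain ⟨i, hi⟩ := Nat.exists_eq_succ_of_ne_zero (hp j)
  obtain ⟨hiI, hpi⟩ := T.symbol_eq_succ_iff.1 hi
  exact ⟨i, hiI, hpi, (T.symbol_eq_succ_iff.1 (hsymbol.symm.trans hi)).2⟩

theorem quasiMeasurePreserving_FR : Measure.QuasiMeasurePreserving T.FR T.m₀ T.m₀ := by
  refine ⟨T.FR_meas, ?_⟩
  have hmap : T.m₀.map T.FR = Measure.sum fun t => T.arrival t T.groundMeasure := by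
    rw [show T.m₀.map T.FR = T.groundMeasure.map T.returnPoint from
        (Measure.map_map T.measurable_returnPoint T.measurable_ground).symm,
      ← sum_restrict_fiber T.groundMeasure T.measurable_returnTime,
      Measure.map_sum T.measurable_returnPoint.aemeasurable,
      sum_restrict_fiber T.groundMeasure T.measurable_returnTime]
    rfl
  rw [hmap]
  exact Measure.absolutelyContinuous_sum_left fun t =>
    Measure.absolutelyContinuous_of_le_smul (T.isTame_groundMeasure.arrival t).le_smul

theorem ae_symbol_iterate_ne_zero : ∀ᵐ x ∂T.m₀, ∀ j, T.symbol (T.FR^[j] x) ≠ 0 := by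
  have hfull : T.m₀ (⋃ i ∈ T.I, T.Λ i)ᶜ = 0 := by
    rw [Set.compl_eq_univ_sdiff]
    exact T.Λ_full
  have hsymbol : ∀ᵐ x ∂T.m₀, T.symbol x ≠ 0 := by
    filter_upwards [measure_eq_zero_iff_ae_notMem.1 hfull] with x hx
    obtain ⟨i, hi, hxi⟩ := Set.mem_iUnion₂.1 (Set.notMem_compl_iff.1 hx)
    exact T.symbol_eq_succ_iff.2 ⟨hi, hxi⟩ ▸ i.succ_ne_zero
  exact ae_all_iff.2 fun j => (T.quasiMeasurePreserving_FR.iterate j).ae hsymbol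

theorem quasiMeasurePreserving_basePoint :
    Measure.QuasiMeasurePreserving (fun p : T.Tower => p.1.1) T.towerMeasure T.m₀ := by
  refine ⟨T.measurable_basePoint, .mk fun A hA hA₀ => ?_⟩
  rw [Measure.map_apply T.measurable_basePoint hA,
    T.towerMeasure_apply (T.measurable_basePoint hA), ENNReal.tsum_eq_zero]
  exact fun l => measure_mono_null (fun x hx => hx.2) hA₀

theorem ae_tower_symbol_iterate_ne_zero :
    ∀ᵐ p ∂T.towerMeasure, ∀ j, T.symbol (T.FR^[j] p.1.1) ≠ 0 :=
  T.quasiMeasurePreserving_basePoint.ae T.ae_symbol_iterate_ne_zero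

/-! ### Approximation of densities from below -/

/-- The infimum of a function over the cylinders of length `k`. It is set to `0` for `k = 0`, so
that the increments in `k` add up to the function. -/
def cylInf (f : T.Tower → ℝ≥0∞) : ℕ → T.Tower → ℝ≥0∞
  | 0, _ => 0
  | k + 1, p => ⨅ (q : T.Tower) (_ : T.itinerary (k + 1) q = T.itinerary (k + 1) p), f q

variable {T} {f : T.Tower → ℝ≥0∞}

theorem cylInf_succ_le_of_itinerary_eq {k : ℕ} {p q : T.Tower}
    (h : T.itinerary (k + 1) q = T.itinerary (k + 1) p) : T.cylInf f (k + 1) p ≤ f q :=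
  iInf₂_le (f := fun q (_ : T.itinerary (k + 1) q = T.itinerary (k + 1) p) => f q) q h

theorem cylInf_le (k : ℕ) (p : T.Tower) : T.cylInf f k p ≤ f p := by
  cases k with
  | zero => exact zero_le
  | succ k => exact cylInf_succ_le_of_itinerary_eq rfl

theorem cylInf_le_succ (k : ℕ) (p : T.Tower) : T.cylInf f k p ≤ T.cylInf f (k + 1) p := by
  cases k with
  | zero => exact zero_le
  | succ k =>
    exact le_iInf₂ fun q hq => cylInf_succ_le_of_itinerary_eq (T.itinerary_eq_of_succ hq)

theorem measurable_cylInf (k : ℕ) : Measurable (T.cylInf f k) := by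
  cases k with
  | zero => exact measurable_const
  | succ k =>
    exact (measurable_of_countable fun c : ℕ × (Fin (k + 1) → ℕ) =>
      ⨅ (q : T.Tower) (_ : T.itinerary (k + 1) q = c), f q).comp (T.measurable_itinerary (k + 1))

theorem cylInf_eq_of_itinerary_eq {k : ℕ} {p q : T.Tower}
    (h : T.itinerary k p = T.itinerary k q) : T.cylInf f k p = T.cylInf f k q := by
  cases k with
  | zero => rfl
  | succ k => simp only [cylInf, h]

theorem towerRegular_withDensity_cylInf_sub {K : ℝ} (hK : 0 ≤ K) (f : T.Tower → ℝ≥0∞) (k : ℕ) :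
    T.TowerRegular K (k + 1)
      (T.towerMeasure.withDensity fun p => T.cylInf f (k + 1) p - T.cylInf f k p) := by
  refine HasDistortion.withDensity (T.one_le_distortionFactor hK) fun n hn p q hpq => ?_
  have hsucc : T.itinerary (k + 1) p = T.itinerary (k + 1) q :=
    SameCylinder.itinerary_eq T ⟨hpq.1, le_trans (Nat.cast_le.2 hn) hpq.2⟩
  rw [cylInf_eq_of_itinerary_eq hsucc, cylInf_eq_of_itinerary_eq (T.itinerary_eq_of_succ hsucc)]

/-! ### Densities in `𝒢_θ⁺` -/

theorem gpow_le_one {θ : ℝ} (hθ : 0 ≤ θ) (s : ℕ∞) : gpow θ s ≤ 1 := by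
  unfold gpow
  split_ifs
  · exact zero_le_one
  · rw [one_div]
    exact inv_le_one_of_one_le₀ (Real.one_le_rpow (le_max_right _ _) hθ)

theorem gpow_le_rpow_neg {θ : ℝ} (hθ : 0 ≤ θ) {s : ℕ∞} {k : ℕ} (hk : 1 ≤ k)
    (h : (k : ℕ∞) ≤ s) : gpow θ s ≤ (k : ℝ) ^ (-θ) := by
  have hk₀ : (0 : ℝ) < k := by exact_mod_cast hk
  unfold gpow
  split_ifs with hs
  · positivity
  · lift s to ℕ using hs
    have hks : (k : ℝ) ≤ s := by exact_mod_cast h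
    rw [one_div, ← Real.rpow_neg (by positivity), ENat.toNat_natCast]
    exact Real.rpow_le_rpow_of_nonpos hk₀ (hks.trans (le_max_left _ _)) (neg_nonpos.2 hθ)

theorem MemGPlus.le_mul_of_sameCylinder {θ D : ℝ} (hθ : 0 ≤ θ) (hD : 0 ≤ D) {φ : T.Tower → ℝ}
    (hφ : T.MemGPlus θ D φ) {k : ℕ} (hk : 1 ≤ k) {p q : T.Tower} (h : T.SameCylinder k p q) :
    φ p ≤ (1 + D * (k : ℝ) ^ (-θ)) * φ q := by
  obtain ⟨i, hi, hpi, hqi⟩ := T.le_sepTime_iff.1 h.2 0 hk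
  have hp : p ∈ T.pieceSet p.1.2 i := ⟨rfl, hpi⟩
  have hq : q ∈ T.pieceSet p.1.2 i := ⟨h.1.symm, hqi⟩
  obtain hzero | ⟨hpos, hratio⟩ := hφ.2 p.1.2 i hi
  · rw [hzero p hp, hzero q hq, mul_zero]
  · rw [← div_le_iff₀ (hpos q hq), ← sub_le_iff_le_add']
    calc φ p / φ q - 1 ≤ D * gpow θ (T.sepTower p q) :=
          (le_abs_self _).trans (hratio p hp q hq)
      _ ≤ D * (k : ℝ) ^ (-θ) := by
          gcongr
          exact gpow_le_rpow_neg hθ hk ((T.le_sepTower_iff hk).2 h)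

theorem MemGPlus.sub_cylInf_le {θ D : ℝ} (hθ : 0 ≤ θ) (hD : 0 ≤ D) {φ : T.Tower → ℝ}
    (hφ : T.MemGPlus θ D φ) (k : ℕ) :
    ∀ᵐ p ∂T.towerMeasure,
      ENNReal.ofReal (φ p) - T.cylInf (fun q => ENNReal.ofReal (φ q)) (k + 1) p ≤
        ENNReal.ofReal (D * ((k + 1 : ℕ) : ℝ) ^ (-θ)) * ENNReal.ofReal (φ p) := by
  filter_upwards [T.ae_tower_symbol_iterate_ne_zero] with p hp
  set e := D * ((k + 1 : ℕ) : ℝ) ^ (-θ)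
  have he₀ : 0 ≤ e := by positivity
  have hne : ENNReal.ofReal (1 + e) ≠ 0 := (ENNReal.ofReal_pos.2 (by linarith)).ne'
  have le_mul_cylInf : ENNReal.ofReal (φ p) ≤
      ENNReal.ofReal (1 + e) * T.cylInf (fun q => ENNReal.ofReal (φ q)) (k + 1) p := by
    rw [← ENNReal.div_le_iff' hne ENNReal.ofReal_ne_top]
    refine le_iInf₂ fun q hq => ?_
    rw [ENNReal.div_le_iff' hne ENNReal.ofReal_ne_top, ← ENNReal.ofReal_mul (by linarith)]
    exact ENNReal.ofReal_le_ofReal (hφ.le_mul_of_sameCylinder hθ hD (by omega)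
      (T.sameCylinder_of_itinerary_eq hp hq.symm))
  rw [tsub_le_iff_left]
  refine le_mul_cylInf.trans ?_
  rw [ENNReal.ofReal_add zero_le_one he₀, ENNReal.ofReal_one, add_mul, one_mul]
  gcongr
  exact cylInf_le _ p

theorem towerMeasure_ne_zero : T.towerMeasure ≠ 0 := by
  intro h
  have hle := T.isTame_groundMeasure.le_smul Set.univ
  rw [h, smul_zero, groundMeasure_univ] at hle
  exact T.m₀_univ_ne_zero (nonpos_iff_eq_zero.1 hle)

theorem MemG.le_inv_measureReal_add [IsFiniteMeasure T.towerMeasure] {θ D : ℝ} (hθ : 0 ≤ θ)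
    (hD : 0 ≤ D) {φ : T.Tower → ℝ} (hφ : T.MemG θ D φ) (hmeas : AEMeasurable φ T.towerMeasure)
    (hone : ∫⁻ p, ENNReal.ofReal (φ p) ∂T.towerMeasure ≤ 1) (p : T.Tower) :
    φ p ≤ (T.towerMeasure.real Set.univ)⁻¹ + D := by
  have hm : T.towerMeasure Set.univ ≠ 0 := Measure.measure_univ_ne_zero.2 T.towerMeasure_ne_zero
  obtain ⟨q, hq⟩ := exists_le_laverage T.towerMeasure_ne_zero hmeas.ennreal_ofReal
  have hmean : φ q ≤ (T.towerMeasure.real Set.univ)⁻¹ := by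
    rw [measureReal_def, ← ENNReal.toReal_inv,
      ← ENNReal.ofReal_le_iff_le_toReal (ENNReal.inv_ne_top.2 hm), ← one_div]
    exact (hq.trans_eq (laverage_eq _ _)).trans (ENNReal.div_le_div_right hone _)
  have hosc : φ p - φ q ≤ D := (le_abs_self _).trans ((hφ p q).trans
    (mul_le_of_le_one_right hD (gpow_le_one hθ _)))
  linarith

end YoungTower

/-! ### Relaxation of densities in `𝒢_θ⁺` -/

namespace YoungTower

variable {Δ₀ : Type*} [MeasurableSpace Δ₀] {T : YoungTower Δ₀}

theorem isTame_zero : T.IsTame 0 := by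
  rw [← zero_smul ℝ≥0∞ T.towerMeasure]
  exact T.isTame_towerMeasure.smul 0

namespace TameAfter

variable {n : ℕ} {ε : ℝ≥0∞} {μ : Measure T.Tower}

theorem mono (h : T.TameAfter n ε μ) {ε' : ℝ≥0∞} (hε : ε ≤ ε') : T.TameAfter n ε' μ := by
  obtain ⟨α, r, hμ, hα, hr⟩ := h
  exact ⟨α, r, hμ, hα, hr.trans hε⟩

theorem mono_time (h : T.TameAfter n ε μ) {n' : ℕ} (hn : n ≤ n') : T.TameAfter n' ε μ := by
  obtain ⟨α, r, hμ, hα, hr⟩ := h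
  refine ⟨T.push (n' - n) α, T.push (n' - n) r, ?_, hα.push _, (T.push_univ _ r).trans_le hr⟩
  rw [← T.push_add, ← hμ, T.push_push, Nat.sub_add_cancel hn]

theorem add (h : T.TameAfter n ε μ) {ε' : ℝ≥0∞} {μ' : Measure T.Tower}
    (h' : T.TameAfter n ε' μ') : T.TameAfter n (ε + ε') (μ + μ') := by
  obtain ⟨α, r, hμ, hα, hr⟩ := h
  obtain ⟨α', r', hμ', hα', hr'⟩ := h'
  refine ⟨α + α', r + r', ?_, hα.add hα', add_le_add hr hr'⟩
  rw [T.push_add, hμ, hμ', add_add_add_comm]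

theorem of_univ_le (h : μ Set.univ ≤ ε) : T.TameAfter n ε μ :=
  ⟨0, T.push n μ, (zero_add _).symm, isTame_zero, (T.push_univ n μ).trans_le h⟩

theorem finsetSum {ι : Type*} {s : Finset ι} {ε : ι → ℝ≥0∞} {μ : ι → Measure T.Tower}
    (h : ∀ i ∈ s, T.TameAfter n (ε i) (μ i)) : T.TameAfter n (∑ i ∈ s, ε i) (∑ i ∈ s, μ i) := by
  classical
  induction s using Finset.induction_on with
  | empty => exact of_univ_le (by simp)
  | insert i s hi ih =>
    rw [Finset.sum_insert hi, Finset.sum_insert hi]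
    exact (h i (Finset.mem_insert_self i s)).add
      (ih fun i' hi' => h i' (Finset.mem_insert_of_mem hi'))

end TameAfter

theorem withDensity_cylInf_eq_sum (f : T.Tower → ℝ≥0∞) (n : ℕ) :
    T.towerMeasure.withDensity (T.cylInf f n) = ∑ k ∈ Finset.range n,
      T.towerMeasure.withDensity fun p => T.cylInf f (k + 1) p - T.cylInf f k p := by
  induction n with
  | zero => exact withDensity_zero
  | succ n ih =>
    have hadd : T.cylInf f (n + 1) =
        T.cylInf f n + fun p => T.cylInf f (n + 1) p - T.cylInf f n p :=
      funext fun p => (add_tsub_cancel_of_le (cylInf_le_succ n p)).symm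
    rw [Finset.sum_range_succ, ← ih, ← withDensity_add_left (measurable_cylInf n), ← hadd]

theorem withDensity_eq_cylInf_add (f : T.Tower → ℝ≥0∞) (n : ℕ) :
    T.towerMeasure.withDensity f = T.towerMeasure.withDensity (T.cylInf f n) +
      T.towerMeasure.withDensity fun p => f p - T.cylInf f n p := by
  rw [← withDensity_add_left (measurable_cylInf n)]
  exact congrArg _ (funext fun p => (add_tsub_cancel_of_le (cylInf_le n p)).symm)

theorem MemGPlus.cylInf_sub_le {θ D b : ℝ} (hθ : 0 ≤ θ) (hD : 0 ≤ D) (hb : 0 ≤ b)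
    {φ : T.Tower → ℝ} (hφ : T.MemGPlus θ D φ) (hle : ∀ p, φ p ≤ b) (k : ℕ) :
    ∀ᵐ p ∂T.towerMeasure,
      T.cylInf (fun q => ENNReal.ofReal (φ q)) (k + 1) p -
          T.cylInf (fun q => ENNReal.ofReal (φ q)) k p ≤
        ENNReal.ofReal ((1 + D) * 2 ^ θ * b * ((k + 1 : ℕ) : ℝ) ^ (-θ)) := by
  have hle' : ∀ p, ENNReal.ofReal (φ p) ≤ ENNReal.ofReal b := fun p => ENNReal.ofReal_le_ofReal
    (hle p)
  cases k with
  | zero =>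
    refine .of_forall fun p => (tsub_le_self.trans (cylInf_le 1 p)).trans ((hle' p).trans ?_)
    refine ENNReal.ofReal_le_ofReal ?_
    have htwo : (1 : ℝ) ≤ 2 ^ θ := Real.one_le_rpow one_le_two hθ
    rw [zero_add, Nat.cast_one, Real.one_rpow, mul_one]
    exact le_mul_of_one_le_left hb (by nlinarith)
  | succ k =>
    filter_upwards [hφ.sub_cylInf_le hθ hD k] with p hp
    refine (tsub_le_tsub_right (cylInf_le (k + 2) p) _).trans (hp.trans ?_)
    refine (mul_le_mul_right (hle' p) _).trans ?_
    rw [← ENNReal.ofReal_mul (by positivity)]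
    refine ENNReal.ofReal_le_ofReal ?_
    calc D * ((k + 1 : ℕ) : ℝ) ^ (-θ) * b
        ≤ (1 + D) * (2 ^ θ * ((k + 1 + 1 : ℕ) : ℝ) ^ (-θ)) * b := by
          gcongr
          · linarith
          · exact natCast_rpow_neg_le_mul_succ (by lia) hθ
      _ = (1 + D) * 2 ^ θ * b * ((k + 1 + 1 : ℕ) : ℝ) ^ (-θ) := by ring

theorem MemGPlus.withDensity_sub_cylInf_univ_le {θ D : ℝ} (hθ : 0 ≤ θ) (hD : 0 ≤ D)
    {φ : T.Tower → ℝ} (hφ : T.MemGPlus θ D φ)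
    (hone : ∫⁻ p, ENNReal.ofReal (φ p) ∂T.towerMeasure ≤ 1) {n : ℕ} (hn : 1 ≤ n) :
    T.towerMeasure.withDensity (fun p => ENNReal.ofReal (φ p) -
        T.cylInf (fun q => ENNReal.ofReal (φ q)) n p) Set.univ ≤
      ENNReal.ofReal (D * (n : ℝ) ^ (-θ)) := by
  obtain ⟨k, rfl⟩ := Nat.exists_eq_add_of_le' hn
  rw [withDensity_apply _ .univ, Measure.restrict_univ]
  refine (lintegral_mono_ae (hφ.sub_cylInf_le hθ hD k)).trans ?_
  rw [lintegral_const_mul' _ _ ENNReal.ofReal_ne_top]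
  exact mul_le_of_le_one_right' hone

namespace HasPolynomialTail

variable {γ C : ℝ}

theorem tameAfter (htail : T.HasPolynomialTail γ C) (hγ : 0 ≤ γ) (hC : 0 ≤ C) {j n : ℕ} {c : ℝ}
    (hc : 0 ≤ c) {μ : Measure T.Tower} (hμ : T.TowerRegular T.tightConst (j + 1) μ)
    (hle : μ ≤ ENNReal.ofReal c • T.towerMeasure) (hn : j + 1 ≤ n) :
    T.TameAfter n (ENNReal.ofReal
      (T.densityBound.toReal * C * 2 ^ γ * T.towerMeasure.real Set.univ *
        (c * ((j + 1 : ℕ) : ℝ) ^ (1 + γ) * (n : ℝ) ^ (-γ)))) μ := by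
  have := htail.isFiniteMeasure_towerMeasure
  set h := n / (j + 1)
  have hj : 0 < j + 1 := j.succ_pos
  have htail_le : T.tail h ≤
      ENNReal.ofReal (C * (2 ^ γ * ((j + 1 : ℕ) : ℝ) ^ γ * (n : ℝ) ^ (-γ))) := by
    refine (htail h ((Nat.one_le_div_iff hj).2 hn)).trans (ENNReal.ofReal_le_ofReal ?_)
    gcongr
    exact natCast_div_rpow_neg_le hj hn hγ
  refine ((hμ.tameAfter (T.isTame_towerMeasure.smul _) hle h).mono_time
    (Nat.mul_div_le n (j + 1))).mono ?_
  have hd : 0 ≤ T.densityBound.toReal := ENNReal.toReal_nonneg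
  calc ((j + 1 : ℕ) : ℝ≥0∞) * (T.densityBound * T.tail h) *
        (ENNReal.ofReal c • T.towerMeasure) Set.univ
      ≤ ENNReal.ofReal ((j + 1 : ℕ) : ℝ) * (ENNReal.ofReal T.densityBound.toReal *
          ENNReal.ofReal (C * (2 ^ γ * ((j + 1 : ℕ) : ℝ) ^ γ * (n : ℝ) ^ (-γ)))) *
          (ENNReal.ofReal c * ENNReal.ofReal (T.towerMeasure.real Set.univ)) := by
        rw [ENNReal.ofReal_natCast, ENNReal.ofReal_toReal T.densityBound_ne_top,
          ofReal_measureReal, Measure.smul_apply, smul_eq_mul]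
        gcongr
    _ = ENNReal.ofReal (((j + 1 : ℕ) : ℝ) * (T.densityBound.toReal *
          (C * (2 ^ γ * ((j + 1 : ℕ) : ℝ) ^ γ * (n : ℝ) ^ (-γ)))) *
          (c * T.towerMeasure.real Set.univ)) := by
        rw [← ENNReal.ofReal_mul hc, ← ENNReal.ofReal_mul hd, ← ENNReal.ofReal_mul (by positivity),
          ← ENNReal.ofReal_mul (by positivity)]
    _ = _ := by
        rw [Real.rpow_add (by positivity), Real.rpow_one]
        congr 1
        ring

theorem exists_tameAfter_withDensity (htail : T.HasPolynomialTail γ C) (hγ : 0 ≤ γ) (hC : 0 ≤ C)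
    {θ D : ℝ} (hθ : γ + 2 < θ) (hD : 0 ≤ D) :
    ∃ S : ℝ, 0 ≤ S ∧ ∀ φ : T.Tower → ℝ, T.MemGPlus θ D φ → AEMeasurable φ T.towerMeasure →
      ∫⁻ p, ENNReal.ofReal (φ p) ∂T.towerMeasure ≤ 1 → ∀ n : ℕ, 1 ≤ n →
      T.TameAfter n (ENNReal.ofReal (S * (n : ℝ) ^ (-γ)))
        (T.towerMeasure.withDensity fun p => ENNReal.ofReal (φ p)) := by
  have := htail.isFiniteMeasure_towerMeasure
  have hθ₀ : 0 ≤ θ := by linarith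
  set b := (T.towerMeasure.real Set.univ)⁻¹ + D
  have hb : 0 ≤ b := add_nonneg (inv_nonneg.2 measureReal_nonneg) hD
  set X := T.densityBound.toReal * C * 2 ^ γ * T.towerMeasure.real Set.univ
  have hX : 0 ≤ X := by positivity
  set Z := ∑' k : ℕ, ((k + 1 : ℕ) : ℝ) ^ (1 + γ - θ)
  have hsummable : Summable fun k : ℕ => ((k + 1 : ℕ) : ℝ) ^ (1 + γ - θ) :=
    (summable_nat_add_iff 1).2 (Real.summable_nat_rpow.2 (by linarith))
  have hZ : 0 ≤ Z := tsum_nonneg fun k => by positivity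
  set B := (1 + D) * 2 ^ θ * b
  have hB₀ : 0 ≤ B := by positivity
  refine ⟨X * (B * Z) + D, by positivity, fun φ hφ hmeas hone n hn => ?_⟩
  have hincrement : ∀ k ∈ Finset.range n,
      T.TameAfter n (ENNReal.ofReal (X * B * (n : ℝ) ^ (-γ) * ((k + 1 : ℕ) : ℝ) ^ (1 + γ - θ)))
        (T.towerMeasure.withDensity fun p => T.cylInf (fun q => ENNReal.ofReal (φ q)) (k + 1) p -
          T.cylInf (fun q => ENNReal.ofReal (φ q)) k p) := fun k hk => by
    have htame := htail.tameAfter hγ hC (by positivity)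
      (towerRegular_withDensity_cylInf_sub T.tightConst_nonneg (fun q => ENNReal.ofReal (φ q)) k)
      (withDensity_le_smul (hφ.cylInf_sub_le hθ₀ hD hb (hφ.1.le_inv_measureReal_add hθ₀ hD hmeas
        hone) k)) (Finset.mem_range.1 hk)
    convert htame using 2
    rw [sub_eq_add_neg, Real.rpow_add (by positivity) (1 + γ)]
    ring
  rw [withDensity_eq_cylInf_add _ n, withDensity_cylInf_eq_sum, add_mul,
    ENNReal.ofReal_add (by positivity) (by positivity)]
  refine ((TameAfter.finsetSum hincrement).mono ?_).add (TameAfter.of_univ_le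
    ((hφ.withDensity_sub_cylInf_univ_le hθ₀ hD hone hn).trans (ENNReal.ofReal_le_ofReal ?_)))
  · rw [← ENNReal.ofReal_sum_of_nonneg fun k _ => by positivity, ← Finset.mul_sum,
      show X * (B * Z) * (n : ℝ) ^ (-γ) = X * B * (n : ℝ) ^ (-γ) * Z by ring]
    gcongr
    exact hsummable.sum_le_tsum _ fun k _ => by positivity
  · gcongr
    · exact_mod_cast hn
    · linarith

end HasPolynomialTail

/-- The remainder is transported without being controlled: it contributes at most its mass. -/
theorem Attracts.abs_measureReal_sub_le {ν : Measure T.Tower} [IsProbabilityMeasure ν] {a : ℕ → ℝ}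
    (hν : T.Attracts ν a) {b n : ℕ} {ε : ℝ} (hε : 0 ≤ ε) {μ : Measure T.Tower} [IsFiniteMeasure μ]
    (hμ : T.TameAfter b (ENNReal.ofReal ε) μ) (hn : 1 ≤ n) (ha : 0 ≤ a n) {A : Set T.Tower}
    (hA : MeasurableSet A) :
    |(T.push (n + b) μ).real A - μ.real Set.univ * ν.real A| ≤ μ.real Set.univ * a n + ε := by
  obtain ⟨α, r, hdecomp, hα, hr⟩ := hμ
  have : IsFiniteMeasure α := isFiniteMeasure_of_le (T.push b μ)
    (hdecomp ▸ Measure.le_add_right le_rfl)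
  have : IsFiniteMeasure r := isFiniteMeasure_of_le (T.push b μ)
    (hdecomp ▸ Measure.le_add_left le_rfl)
  have hrε : r.real Set.univ ≤ ε := ENNReal.toReal_le_of_le_ofReal hε hr
  have hmass : μ.real Set.univ = α.real Set.univ + r.real Set.univ := by
    rw [measureReal_def, ← T.push_univ b μ, hdecomp, ← measureReal_def, measureReal_add_apply]
  have hpush : (T.push (n + b) μ).real A = (T.push n α).real A + (T.push n r).real A := by
    rw [← T.push_push, hdecomp, T.push_add, measureReal_add_apply]
  have hα_near := hν α hα n hn A hA
  have hr_near : |(T.push n r).real A - r.real Set.univ * ν.real A| ≤ r.real Set.univ := by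
    have hle : (T.push n r).real A ≤ r.real Set.univ := by
      rw [measureReal_def r, ← T.push_univ n r]
      exact measureReal_mono (Set.subset_univ A)
    exact abs_sub_le_of_nonneg_of_le measureReal_nonneg hle
      (mul_nonneg measureReal_nonneg measureReal_nonneg)
      (mul_le_of_le_one_right measureReal_nonneg measureReal_le_one)
  calc |(T.push (n + b) μ).real A - μ.real Set.univ * ν.real A|
      = |((T.push n α).real A - α.real Set.univ * ν.real A) +
          ((T.push n r).real A - r.real Set.univ * ν.real A)| := by
        rw [hmass, hpush]
        ring_nf
    _ ≤ α.real Set.univ * a n + r.real Set.univ :=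
        (abs_add_le _ _).trans (add_le_add hα_near hr_near)
    _ ≤ μ.real Set.univ * a n + ε := by
        gcongr
        exact hmass ▸ le_add_of_nonneg_right measureReal_nonneg

end YoungTower

/-! ### Ergodicity of the equilibrium -/

namespace YoungTower

variable {Δ₀ : Type*} [MeasurableSpace Δ₀] (T : YoungTower Δ₀)

theorem measurableSet_slice {s : Set T.Tower} (hs : MeasurableSet s) (l : ℕ) :
    MeasurableSet (T.slice s l) := by
  rw [slice_eq_preimage_inter]
  exact ((measurable_id.prodMk measurable_const)
    (T.measurableEmbedding_coe.measurableSet_image.2 hs)).inter (T.measurableSet_lt_R l)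

/-- The measurable sets which are unions of cylinders of a common length. -/
def cylinderSets : Set (Set T.Tower) :=
  {s | MeasurableSet s ∧ ∃ k, ∀ p q, T.SameCylinder k p q → (p ∈ s ↔ q ∈ s)}

variable {T}

theorem SameCylinder.mono {k k' : ℕ} {p q : T.Tower} (h : T.SameCylinder k' p q) (hk : k ≤ k') :
    T.SameCylinder k p q :=
  ⟨h.1, le_trans (by exact_mod_cast hk) h.2⟩

variable (T) in
theorem isSetAlgebra_cylinderSets : IsSetAlgebra T.cylinderSets where
  empty_mem := ⟨.empty, 0, fun _ _ _ => Iff.rfl⟩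
  compl_mem := fun _ ⟨hs, k, hk⟩ => ⟨hs.compl, k, fun p q hpq => not_congr (hk p q hpq)⟩
  union_mem := fun _ _ ⟨hs, k, hk⟩ ⟨ht, k', hk'⟩ =>
    ⟨hs.union ht, max k k', fun p q hpq => or_congr (hk p q (hpq.mono (le_max_left k k')))
      (hk' p q (hpq.mono (le_max_right k k')))⟩

theorem level_preimage_mem_cylinderSets (l : ℕ) : {p : T.Tower | p.1.2 = l} ∈ T.cylinderSets :=
  ⟨measurableSet_eq_fun T.measurable_level measurable_const, 0, fun _ _ hpq =>
    Eq.congr_left hpq.1⟩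

theorem basePoint_preimage_mem_cylinderSets (k : ℕ) {i : ℕ} (hi : i ∈ T.I) :
    {p : T.Tower | T.FR^[k] p.1.1 ∈ T.Λ i} ∈ T.cylinderSets := by
  refine ⟨T.measurable_basePoint (T.FR_meas.iterate k (T.Λ_meas i hi)), k + 1, fun p q hpq => ?_⟩
  obtain ⟨i', hi', hp, hq⟩ := T.le_sepTime_iff.1 hpq.2 k k.lt_succ_self
  have mem_iff {x : Δ₀} (hx : x ∈ T.Λ i') : x ∈ T.Λ i ↔ i = i' :=
    ⟨fun h => T.Λ_disj.elim_set hi hi' x h hx, fun h => h ▸ hx⟩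
  exact (mem_iff hp).trans (mem_iff hq).symm

variable (T) in
theorem exists_generateFrom_cylinderSets_ae_eq {s : Set T.Tower} (hs : MeasurableSet s) :
    ∃ t, MeasurableSet[MeasurableSpace.generateFrom T.cylinderSets] t ∧
      s =ᵐ[T.towerMeasure] t := by
  choose B hB hslice using fun l => T.generating _ (T.measurableSet_slice hs l)
  have hbase : ∀ l, MeasurableSet[MeasurableSpace.generateFrom T.cylinderSets]
      {p : T.Tower | p.1.1 ∈ B l} := fun l => by
    let : MeasurableSpace T.Tower := MeasurableSpace.generateFrom T.cylinderSets
    refine measurable_generateFrom (f := fun p : T.Tower => p.1.1) ?_ (hB l)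
    rintro _ ⟨k, i, hi, rfl⟩
    exact MeasurableSpace.measurableSet_generateFrom (basePoint_preimage_mem_cylinderSets k hi)
  refine ⟨⋃ l, {p | p.1.2 = l} ∩ {p | p.1.1 ∈ B l}, .iUnion fun l => .inter
    (MeasurableSpace.measurableSet_generateFrom (level_preimage_mem_cylinderSets l)) (hbase l), ?_⟩
  have hae : ∀ᵐ p ∂T.towerMeasure, ∀ l, p.1.1 ∈ T.slice s l ↔ p.1.1 ∈ B l :=
    ae_all_iff.2 fun l => T.quasiMeasurePreserving_basePoint.ae (hslice l).mem_iff
  refine Filter.eventuallyEq_set.2 (hae.mono fun p hp => ?_)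
  have hmem_slice : p.1.1 ∈ T.slice s p.1.2 ↔ p ∈ s := ⟨fun ⟨_, h⟩ => h, fun h => ⟨p.2, h⟩⟩
  simp only [Set.mem_iUnion, Set.mem_inter_iff, Set.mem_ofPred_eq, exists_eq_left']
  exact hmem_slice.symm.trans (hp _)

theorem exists_towerRegular_restrict {t : Set T.Tower} (ht : t ∈ T.cylinderSets) :
    ∃ j, T.TowerRegular T.tightConst (j + 1) (T.towerMeasure.restrict t) := by
  obtain ⟨hmeas, k, hk⟩ := ht
  refine ⟨k, ?_⟩
  rw [← withDensity_indicator_one hmeas]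
  refine .withDensity (T.one_le_distortionFactor T.tightConst_nonneg) fun k' hk' p q hpq => ?_
  exact Set.indicator_eq_indicator (hk p q (hpq.mono (k.le_succ.trans hk'))) rfl

theorem TowerRegular.exists_tameAfter [IsFiniteMeasure T.towerMeasure]
    (htail : Filter.Tendsto T.tail Filter.atTop (nhds 0)) {j : ℕ} {μ : Measure T.Tower}
    (hμ : T.TowerRegular T.tightConst (j + 1) μ) (hle : μ ≤ T.towerMeasure)
    {ε : ℝ≥0∞} (hε : 0 < ε) : ∃ b, T.TameAfter b ε μ := by
  have hlim : Filter.Tendsto (fun h => (j + 1 : ℕ) * (T.densityBound * T.tail h) *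
      T.towerMeasure Set.univ) Filter.atTop (nhds 0) := by
    have := ENNReal.Tendsto.mul_const (b := T.towerMeasure Set.univ) (ENNReal.Tendsto.const_mul
      (a := ((j + 1 : ℕ) : ℝ≥0∞)) (ENNReal.Tendsto.const_mul (a := T.densityBound) htail
        (.inr T.densityBound_ne_top)) (.inr (ENNReal.natCast_ne_top _))) (.inr (measure_ne_top _ _))
    rwa [mul_zero, mul_zero, zero_mul] at this
  obtain ⟨h, hh⟩ := (hlim.eventually_lt_const hε).exists
  exact ⟨_, (hμ.tameAfter T.isTame_towerMeasure hle h).mono hh.le⟩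

variable {ν : Measure T.Tower} [IsProbabilityMeasure ν] {a : ℕ → ℝ}

theorem Attracts.tendsto_push (hν : T.Attracts ν a) (ha₀ : ∀ n, 0 ≤ a n)
    (ha : Filter.Tendsto a Filter.atTop (nhds 0)) {μ : Measure T.Tower} [IsFiniteMeasure μ]
    (hμ : ∀ ε : ℝ≥0∞, 0 < ε → ∃ b, T.TameAfter b ε μ) {A : Set T.Tower} (hA : MeasurableSet A) :
    Filter.Tendsto (fun n => (T.push n μ).real A) Filter.atTop
      (nhds (μ.real Set.univ * ν.real A)) := by
  rw [Metric.tendsto_atTop]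
  intro ε hε
  obtain ⟨b, hb⟩ := hμ (ENNReal.ofReal (ε / 2)) (by positivity)
  have hrate : Filter.Tendsto (fun n => μ.real Set.univ * a n) Filter.atTop (nhds 0) := by
    simpa using ha.const_mul (μ.real Set.univ)
  obtain ⟨N, hN⟩ := Filter.eventually_atTop.1
    ((hrate.eventually_lt_const (half_pos hε)).and (Filter.eventually_ge_atTop 1))
  refine ⟨N + b, fun n hn => ?_⟩
  obtain ⟨hsmall, hone⟩ := hN (n - b) (by omega)
  have hnear := hν.abs_measureReal_sub_le (half_pos hε).le hb hone (ha₀ _) hA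
  rw [Nat.sub_add_cancel (by omega)] at hnear
  rw [Real.dist_eq]
  linarith

variable [IsFiniteMeasure T.towerMeasure]

theorem Attracts.measureReal_sdiff_eq (hν : T.Attracts ν a) (ha₀ : ∀ n, 0 ≤ a n)
    (ha : Filter.Tendsto a Filter.atTop (nhds 0))
    (htail : Filter.Tendsto T.tail Filter.atTop (nhds 0)) {s t : Set T.Tower}
    (hs : MeasurableSet s) (hinv : T.towerMap ⁻¹' s = s) (ht : t ∈ T.cylinderSets) :
    T.towerMeasure.real (t \ s) = T.towerMeasure.real t * ν.real sᶜ := by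
  obtain ⟨j, hreg⟩ := exists_towerRegular_restrict ht
  have hlim := hν.tendsto_push ha₀ ha
    (fun _ => hreg.exists_tameAfter htail Measure.restrict_le_self) hs.compl
  have hconst : ∀ n, (T.push n (T.towerMeasure.restrict t)).real sᶜ =
      T.towerMeasure.real (t \ s) := fun n => by
    rw [measureReal_def, T.push_apply n _ hs.compl, Set.preimage_compl, Set.preimage_iterate_eq,
      (Function.IsFixedPt.iterate hinv n).eq, Measure.restrict_apply hs.compl, Set.inter_comm,
      ← Set.sdiff_eq, ← measureReal_def]
  simp only [hconst, measureReal_restrict_apply_univ] at hlim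
  exact tendsto_nhds_unique tendsto_const_nhds hlim

/-- An invariant set is almost a union of cylinders, and those equidistribute. -/
theorem Attracts.measureReal_mul_compl_eq_zero (hν : T.Attracts ν a) (ha₀ : ∀ n, 0 ≤ a n)
    (ha : Filter.Tendsto a Filter.atTop (nhds 0))
    (htail : Filter.Tendsto T.tail Filter.atTop (nhds 0)) {s : Set T.Tower}
    (hs : MeasurableSet s) (hinv : T.towerMap ⁻¹' s = s) :
    T.towerMeasure.real s * ν.real sᶜ = 0 := by
  refine le_antisymm (le_of_forall_pos_le_add fun ε hε => ?_) (by positivity)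
  obtain ⟨t, ht, hst⟩ := exists_measure_symmDiff_lt T.isSetAlgebra_cylinderSets
    (fun _ h => h.1) (T.exists_generateFrom_cylinderSets_ae_eq hs) (half_pos hε)
  have hst_real : T.towerMeasure.real (symmDiff s t) ≤ ε / 2 :=
    ENNReal.toReal_le_of_le_ofReal (half_pos hε).le hst.le
  have hs_le : T.towerMeasure.real s ≤ T.towerMeasure.real t + ε / 2 := by
    have hsub : s ⊆ t ∪ symmDiff s t := fun p hp =>
      (em (p ∈ t)).imp id fun hpt => .inl ⟨hp, hpt⟩
    exact (measureReal_mono hsub).trans ((measureReal_union_le _ _).trans (by gcongr))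
  have hts : T.towerMeasure.real (t \ s) ≤ ε / 2 :=
    (measureReal_mono Set.subset_union_right).trans hst_real
  calc T.towerMeasure.real s * ν.real sᶜ ≤ (T.towerMeasure.real t + ε / 2) * ν.real sᶜ := by gcongr
    _ ≤ T.towerMeasure.real (t \ s) + ε / 2 := by
        rw [add_mul, hν.measureReal_sdiff_eq ha₀ ha htail hs hinv ht]
        gcongr
        exact mul_le_of_le_one_right (half_pos hε).le measureReal_le_one
    _ ≤ 0 + ε := by linarith

theorem Attracts.ergodic (hν : T.Attracts ν a) (ha₀ : ∀ n, 0 ≤ a n)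
    (ha : Filter.Tendsto a Filter.atTop (nhds 0))
    (htail : Filter.Tendsto T.tail Filter.atTop (nhds 0)) (hinv : T.IsInvariantEquiv ν) :
    Ergodic T.towerMap ν := by
  refine ⟨hinv.1, ⟨fun s hs hsinv => Filter.eventuallyConst_set.2 ?_⟩⟩
  rcases mul_eq_zero.1 (hν.measureReal_mul_compl_eq_zero ha₀ ha htail hs hsinv) with h | h
  · exact .inr (hinv.2.1 (measure_eq_zero_iff_ae_notMem.1 ((measureReal_eq_zero_iff).1 h)))
  · exact .inl ((measureReal_eq_zero_iff).1 h)

end YoungTower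

/-! ### Convergence in total variation -/

namespace YoungTower

variable {Δ₀ : Type*} [MeasurableSpace Δ₀] {T : YoungTower Δ₀} {γ C : ℝ}

theorem HasPolynomialTail.exists_abs_measureReal_sub_le (htail : T.HasPolynomialTail γ C)
    (hγ : 0 ≤ γ) (hC : 0 ≤ C) {θ D : ℝ} (hθ : γ + 2 < θ) (hD : 0 ≤ D) {ν : Measure T.Tower}
    [IsProbabilityMeasure ν] {K : ℝ} (hK : 0 ≤ K) (hν : T.Attracts ν fun n => K * (n : ℝ) ^ (-γ)) :
    ∃ S : ℝ, 0 ≤ S ∧ ∀ (lam : Measure T.Tower) [IsProbabilityMeasure lam] (φ : T.Tower → ℝ),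
      AEMeasurable φ T.towerMeasure →
      lam = T.towerMeasure.withDensity (fun p => ENNReal.ofReal (φ p)) → T.MemGPlus θ D φ →
      ∀ n : ℕ, 2 ≤ n → ∀ A, MeasurableSet A →
        |(T.push n lam).real A - ν.real A| ≤ S * (n : ℝ) ^ (-γ) := by
  obtain ⟨S, hS, htame⟩ := htail.exists_tameAfter_withDensity hγ hC hθ hD
  refine ⟨K * 2 ^ γ + S * 3 ^ γ, by positivity, fun lam _ φ hmeas hlam hφ n hn A hA => ?_⟩
  have hone : ∫⁻ p, ENNReal.ofReal (φ p) ∂T.towerMeasure = 1 := by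
    rw [← setLIntegral_univ, ← withDensity_apply _ .univ, ← hlam, measure_univ]
  have htame_half := hlam ▸ htame φ hφ hmeas hone.le (n / 2) (by omega)
  have hnear := hν.abs_measureReal_sub_le (by positivity) htame_half
    (n := n - n / 2) (by omega) (by positivity) hA
  rw [Nat.sub_add_cancel (Nat.div_le_self n 2), probReal_univ, one_mul, one_mul] at hnear
  have hn₀ : (0 : ℝ) < n := by exact_mod_cast (by omega : 0 < n)
  have htwo : ((n - n / 2 : ℕ) : ℝ) ^ (-γ) ≤ 2 ^ γ * (n : ℝ) ^ (-γ) :=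
    rpow_neg_le_of_le_mul hn₀ two_pos (by exact_mod_cast (by omega : n ≤ 2 * (n - n / 2))) hγ
  have hthree : ((n / 2 : ℕ) : ℝ) ^ (-γ) ≤ 3 ^ γ * (n : ℝ) ^ (-γ) :=
    rpow_neg_le_of_le_mul hn₀ three_pos (by exact_mod_cast (by omega : n ≤ 3 * (n / 2))) hγ
  calc |(T.push n lam).real A - ν.real A|
      ≤ K * ((n - n / 2 : ℕ) : ℝ) ^ (-γ) + S * ((n / 2 : ℕ) : ℝ) ^ (-γ) := hnear
    _ ≤ K * (2 ^ γ * (n : ℝ) ^ (-γ)) + S * (3 ^ γ * (n : ℝ) ^ (-γ)) := by gcongr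
    _ = (K * 2 ^ γ + S * 3 ^ γ) * (n : ℝ) ^ (-γ) := by ring

theorem HasPolynomialTail.exists_tvDist_le (htail : T.HasPolynomialTail γ C) (hγ : 0 ≤ γ)
    (hC : 0 ≤ C) {θ D : ℝ} (hθ : γ + 2 < θ) (hD : 0 ≤ D) {ν : Measure T.Tower}
    [IsProbabilityMeasure ν] {K : ℝ} (hK : 0 ≤ K) (hν : T.Attracts ν fun n => K * (n : ℝ) ^ (-γ)) :
    ∃ C' : ℝ, 0 < C' ∧ ∀ (lam : Measure T.Tower) [IsProbabilityMeasure lam] (φ : T.Tower → ℝ),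
      AEMeasurable φ T.towerMeasure →
      lam = T.towerMeasure.withDensity (fun p => ENNReal.ofReal (φ p)) → T.MemGPlus θ D φ →
      ∀ n : ℕ, 1 ≤ n → tvDist (T.push n lam) ν ≤ C' * (n : ℝ) ^ (-γ) := by
  obtain ⟨S, hS, hnear⟩ := htail.exists_abs_measureReal_sub_le hγ hC hθ hD hK hν
  refine ⟨2 * (S + 1), by positivity, fun lam _ φ hmeas hlam hφ n hn => ?_⟩
  rw [mul_assoc]
  refine tvDist_le_two_mul fun A hA => ?_
  obtain rfl | hn₂ := hn.eq_or_lt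
  · rw [Nat.cast_one, Real.one_rpow, mul_one]
    exact (abs_sub_le_of_nonneg_of_le measureReal_nonneg measureReal_le_one measureReal_nonneg
      measureReal_le_one).trans (le_add_of_nonneg_left hS)
  · refine (hnear lam φ hmeas hlam hφ n hn₂ A hA).trans ?_
    gcongr
    exact le_add_of_nonneg_right zero_le_one

theorem HasPolynomialTail.exists_equilibrium_forall_eq (htail : T.HasPolynomialTail γ C)
    (hγ : 0 < γ) (hC : 0 ≤ C) :
    ∃ ν : ProbabilityMeasure T.Tower, T.IsInvariantEquiv (ν : Measure T.Tower) ∧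
      (∀ ν' : ProbabilityMeasure T.Tower, T.IsInvariantEquiv (ν' : Measure T.Tower) → ν' = ν) ∧
      ∃ K : ℝ, 0 ≤ K ∧ T.Attracts (ν : Measure T.Tower) fun n => K * (n : ℝ) ^ (-γ) := by
  have := htail.isFiniteMeasure_towerMeasure
  obtain ⟨ν, _, hinv, K, hK, hν⟩ := htail.exists_equilibrium hγ hC
  have herg : Ergodic T.towerMap ν :=
    hν.ergodic (fun n => by positivity) (tendsto_const_mul_natCast_rpow_neg K hγ)
      (htail.tendsto hγ) hinv
  exact ⟨⟨ν, ‹_›⟩, hinv, fun ν' hν' => ProbabilityMeasure.toMeasure_injective <|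
    herg.eq_of_absolutelyContinuous hν'.1 (hν'.2.1.trans hinv.2.2), K, hK, hν⟩

end YoungTower

end

theorem young_tower_polynomial_equilibrium_Gtheta {Δ₀ : Type*} [MeasurableSpace Δ₀]
    (T : YoungTower Δ₀) :
    ∃ θ₀ : ℝ, 1 < θ₀ ∧ ∀ θ : ℝ, θ₀ ≤ θ → ∃ ζ₀ : ℝ, 1 < ζ₀ ∧
      ∀ ζ : ℝ, 1 < ζ → ζ < ζ₀ → ∀ C : ℝ, 0 < C →
        (∀ n : ℕ, 1 ≤ n → (T.m₀ {x | n < T.R x}).toReal ≤ C / (n : ℝ) ^ ζ) →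
        (∃! ν : ProbabilityMeasure T.Tower, T.IsInvariantEquiv (ν : Measure T.Tower)) ∧
        ∀ ν : ProbabilityMeasure T.Tower, T.IsInvariantEquiv (ν : Measure T.Tower) →
          ∀ D : ℝ, 0 < D → ∃ C' : ℝ, 0 < C' ∧
            ∀ (lam : ProbabilityMeasure T.Tower) (φ : T.Tower → ℝ),
              AEMeasurable φ T.towerMeasure →
              (lam : Measure T.Tower) =
                T.towerMeasure.withDensity (fun p => ENNReal.ofReal (φ p)) →
              T.MemGPlus θ D φ →
              ∀ n : ℕ, 1 ≤ n →
                tvDist (Measure.map (T.towerMap^[n]) (lam : Measure T.Tower))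
                  (ν : Measure T.Tower) ≤ C' / (n : ℝ) ^ (ζ - 1) := by
  refine ⟨3, by norm_num, fun θ hθ => ⟨θ - 1, by linarith, fun ζ hζ hζθ C hC hR => ?_⟩⟩
  have hγ : 0 < ζ - 1 := sub_pos.2 hζ
  have hCτ : 0 ≤ C * (2 ^ ζ / (ζ - 1)) := by positivity
  have htail := T.hasPolynomialTail hζ hC.le hR
  obtain ⟨ν, hinv, huniq, K, hK, hν⟩ := htail.exists_equilibrium_forall_eq hγ hCτ
  refine ⟨⟨ν, hinv, huniq⟩, fun ν' hν' D hD => ?_⟩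
  obtain rfl := huniq ν' hν'
  obtain ⟨C', hC', hrate⟩ :=
    htail.exists_tvDist_le (θ := θ) hγ.le hCτ (by linarith) hD.le hK hν
  refine ⟨C', hC', fun lam φ hmeas hlam hφ n hn => (hrate lam φ hmeas hlam hφ n hn).trans_eq ?_⟩
  rw [Real.rpow_neg (Nat.cast_nonneg n), div_eq_mul_inv]
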